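/- arXiv:0801.3556 — 2 statements merged into one kernel-verified Lean document; each statement's English description precedes it below -/
import Mathlib

section
/- There exist absolute constants c, C > 0 such that the following holds. Let (Ω, μ) be a probability space, let n ≥ 4 be an even integer, and let (φ_j)_{j=1}^n be an orthonormal system in L₂(Ω, μ) (complex-valued) with ‖φ_j‖_{L∞} ≤ L for all 1 ≤ j ≤ n. For every p ∈ (1, 2) there exists a subset I ⊆ {1, …, n} with n/2 − c·√n ≤ |I| ≤ n/2 + c·√n such that for every a = (a_i) ∈ ℂⁿ, both ‖∑_{i ∈ I} a_i φ_i‖_{L₂} ≤ (C/(p−1)^{5/2}) · L · √(log n) · ‖∑_{i ∈ I} a_i φ_i‖_{L_p} and ‖∑_{i ∉ I} a_i φ_i‖_{L₂} ≤ (C/(p−1)^{5/2}) · L · √(log n) · ‖∑_{i ∉ I} a_i φ_i‖_{L_p}. -/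
open MeasureTheory


/-- 2-uniform convexity of a real normed space with constant `η`. -/
def UConv (V : Type*) [NormedAddCommGroup V] [NormedSpace ℝ V] (η : ℝ) : Prop :=
  ∀ x y : V, ‖(1 / 2 : ℝ) • (x + y)‖ ^ 2 ≤ (‖x‖ ^ 2 + ‖y‖ ^ 2) / 2 - η * ‖x - y‖ ^ 2

section Smooth
variable {V : Type*} [NormedAddCommGroup V] [NormedSpace ℝ V] [FiniteDimensional ℝ V]

lemma exists_max_conj (ξ : V →L[ℝ] ℝ) :
    ∃ v : V, ∀ w : V, ξ w - ‖w‖ ^ 2 / 2 ≤ ξ v - ‖v‖ ^ 2 / 2 := by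
  haveI : ProperSpace V := FiniteDimensional.proper ℝ V
  have hc : IsCompact (Metric.closedBall (0 : V) (2 * ‖ξ‖)) := isCompact_closedBall _ _
  have hcont : Continuous (fun v : V => ξ v - ‖v‖ ^ 2 / 2) := by fun_prop
  have h0 : (0 : V) ∈ Metric.closedBall (0 : V) (2 * ‖ξ‖) := by
    simp
  obtain ⟨v, hv, hmax⟩ := hc.exists_isMaxOn ⟨0, h0⟩ hcont.continuousOn
  refine ⟨v, fun w => ?_⟩
  by_cases hw : w ∈ Metric.closedBall (0 : V) (2 * ‖ξ‖)
  · exact hmax hw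
  · have h1 : ξ 0 - ‖(0 : V)‖ ^ 2 / 2 ≤ ξ v - ‖v‖ ^ 2 / 2 := hmax h0
    simp only [Metric.mem_closedBall, dist_zero_right, not_le] at hw
    have h2 : ξ w ≤ ‖ξ‖ * ‖w‖ := (le_abs_self _).trans (ξ.le_opNorm w)
    simp only [map_zero, norm_zero] at h1
    nlinarith [norm_nonneg w, norm_nonneg ξ]

/-- The mirror map. -/
noncomputable def mirr (ξ : V →L[ℝ] ℝ) : V := Classical.choose (exists_max_conj ξ)

/-- The conjugate of half the squared norm. -/
noncomputable def conj2 (ξ : V →L[ℝ] ℝ) : ℝ := ξ (mirr ξ) - ‖mirr ξ‖ ^ 2 / 2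

lemma le_conj2 (ξ : V →L[ℝ] ℝ) (w : V) : ξ w - ‖w‖ ^ 2 / 2 ≤ conj2 ξ :=
  Classical.choose_spec (exists_max_conj ξ) w

lemma conj2_nonneg (ξ : V →L[ℝ] ℝ) : 0 ≤ conj2 ξ := by
  have := le_conj2 ξ 0
  simpa using this

lemma conj2_zero : conj2 (0 : V →L[ℝ] ℝ) = 0 := by
  apply le_antisymm _ (conj2_nonneg _)
  unfold conj2
  simp only [_root_.zero_apply]
  nlinarith [norm_nonneg (mirr (0 : V →L[ℝ] ℝ))]

lemma sq_le_conj2 (ξ : V →L[ℝ] ℝ) (v : V) (hv : ‖v‖ ≤ 1) : (ξ v) ^ 2 / 2 ≤ conj2 ξ := by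
  have := le_conj2 ξ ((ξ v) • v)
  simp only [map_smul, smul_eq_mul, norm_smul, Real.norm_eq_abs, mul_pow, sq_abs] at this
  have h1 : ‖v‖ ^ 2 ≤ 1 := by nlinarith [norm_nonneg v]
  nlinarith [sq_nonneg (ξ v)]

lemma conj2_add_le {η : ℝ} (hη : 0 < η) (hV : UConv V η) (ξ b : V →L[ℝ] ℝ) (β : ℝ)
    (hb : ∀ v, |b v| ≤ β * ‖v‖) :
    conj2 (ξ + b) ≤ conj2 ξ + b (mirr ξ) + β ^ 2 / (4 * η) := by
  set w := mirr (ξ + b) with hw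
  set y := mirr ξ with hy
  have h1 : conj2 (ξ + b) = ξ w + b w - ‖w‖ ^ 2 / 2 := by
    unfold conj2; simp [← hw]
  have h2 : conj2 ξ = ξ y - ‖y‖ ^ 2 / 2 := rfl
  have h3 := le_conj2 ξ ((1 / 2 : ℝ) • (w + y))
  have h4 := hV w y
  simp only [map_smul, map_add, smul_eq_mul] at h3
  have h5 := (le_abs_self _).trans (hb (w - y))
  rw [map_sub] at h5
  have h6 : β * ‖w - y‖ - η * ‖w - y‖ ^ 2 ≤ β ^ 2 / (4 * η) := by
    rw [le_div_iff₀ (by positivity)]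
    nlinarith [sq_nonneg (β - 2 * η * ‖w - y‖)]
  rw [h1]
  nlinarith

end Smooth

section PackInf
variable {V : Type*} [NormedAddCommGroup V] [NormedSpace ℝ V] [FiniteDimensional ℝ V]

open Classical in
/-- The functionals reached by mirror descent in at most `T` steps. -/
noncomputable def mdSet {n : ℕ} (u : Fin n → V →L[ℝ] ℝ) (t : ℝ) : ℕ → Finset (V →L[ℝ] ℝ)
  | 0 => {0}
  | T + 1 => (mdSet u t T ×ˢ (Finset.univ : Finset (Option (Fin n × Bool)))).image
      (fun q => match q.2 with
        | none => q.1
        | some (i, true) => q.1 + t • u i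
        | some (i, false) => q.1 - t • u i)

lemma mdSet_card {n : ℕ} (u : Fin n → V →L[ℝ] ℝ) (t : ℝ) (T : ℕ) :
    (mdSet u t T).card ≤ (2 * n + 1) ^ T := by
  induction T with
  | zero => simp [mdSet]
  | succ T ih =>
    unfold mdSet
    classical
    refine Finset.card_image_le.trans ?_
    rw [Finset.card_product, pow_succ]
    refine Nat.mul_le_mul ih ?_
    simp [mul_comm]

lemma mdSet_cover {n : ℕ} (u : Fin n → V →L[ℝ] ℝ) {η L r : ℝ} (hη : 0 < η) (hL : 0 < L)
    (hr : 0 < r) (hV : UConv V η) (hu : ∀ i v, |u i v| ≤ L * ‖v‖) (f : V) (T : ℕ) :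
    ∃ ξ ∈ mdSet u (2 * η * r / L ^ 2) T, (∀ i, |u i (f - mirr ξ)| ≤ r) ∨
      conj2 ξ - ξ f ≤ - (T * (η * r ^ 2 / L ^ 2)) := by
  classical
  induction T with
  | zero => exact ⟨0, by simp [mdSet], Or.inr (by simp [conj2_zero])⟩
  | succ T ih =>
    obtain ⟨ξ, hξ, h⟩ := ih
    set t := 2 * η * r / L ^ 2 with ht
    have htpos : 0 < t := by positivity
    by_cases hg : ∀ i, |u i (f - mirr ξ)| ≤ r
    · refine ⟨ξ, ?_, Or.inl hg⟩
      unfold mdSet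
      exact Finset.mem_image.2 ⟨(ξ, none), by simp [hξ], rfl⟩
    · have h := h.resolve_left hg
      push Not at hg
      obtain ⟨i, hi⟩ := hg
      have key : ∀ σ : ℝ, |σ| = 1 → r < σ * u i (f - mirr ξ) →
          conj2 (ξ + (t * σ) • u i) - (ξ + (t * σ) • u i) f ≤
            - ((T + 1 : ℕ) * (η * r ^ 2 / L ^ 2)) := by
        intro σ hσ hs
        have h1 := conj2_add_le hη hV ξ ((t * σ) • u i) (t * L) (by
          intro v
          simp only [_root_.smul_apply, smul_eq_mul, abs_mul, hσ, abs_of_pos htpos]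
          nlinarith [hu i v])
        simp only [_root_.smul_apply, smul_eq_mul, _root_.add_apply]
          at h1 ⊢
        rw [map_sub] at hs
        have h2 : (t * L) ^ 2 / (4 * η) = η * r ^ 2 / L ^ 2 := by
          rw [ht]; field_simp; ring
        have h3 : t * r = 2 * (η * r ^ 2 / L ^ 2) := by
          rw [ht]; field_simp
        have h4 := mul_lt_mul_of_pos_left hs htpos
        push_cast
        nlinarith
      rcases lt_abs.1 hi with h' | h'
      · refine ⟨ξ + t • u i, ?_, Or.inr ?_⟩
        · unfold mdSet
          exact Finset.mem_image.2 ⟨(ξ, some (i, true)), by simp [hξ], rfl⟩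
        · have := key 1 (by simp) (by simpa using h')
          simpa using this
      · refine ⟨ξ - t • u i, ?_, Or.inr ?_⟩
        · unfold mdSet
          exact Finset.mem_image.2 ⟨(ξ, some (i, false)), by simp [hξ], rfl⟩
        · have := key (-1) (by simp) (by simpa using h')
          have e : ξ - t • u i = ξ + (t * -1) • u i := by
            ext x
            simp [sub_eq_add_neg]
          rw [e]
          exact this

/-- Packing bound in the sup metric. -/
lemma pack_inf {n : ℕ} (u : Fin n → V →L[ℝ] ℝ) {η L r : ℝ} (hη : 0 < η) (hL : 0 < L)
    (hr : 0 < r) (hV : UConv V η) (hu : ∀ i v, |u i v| ≤ L * ‖v‖) (T : ℕ)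
    (hT : 1 / 2 < T * (η * r ^ 2 / L ^ 2)) (F : Finset V) (hF : ∀ f ∈ F, ‖f‖ ≤ 1)
    (hsep : ∀ f ∈ F, ∀ g ∈ F, (∀ i, |u i (f - g)| ≤ 2 * r) → f = g) :
    F.card ≤ (2 * n + 1) ^ T := by
  classical
  have hex : ∀ f : V, ∃ ξ : V →L[ℝ] ℝ, f ∈ F → ξ ∈ mdSet u (2 * η * r / L ^ 2) T ∧
      ∀ i, |u i (f - mirr ξ)| ≤ r := by
    intro f
    obtain ⟨ξ, hξ, h⟩ := mdSet_cover u hη hL hr hV hu f T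
    refine ⟨ξ, fun hf => ⟨hξ, h.resolve_right ?_⟩⟩
    intro h'
    have h1 := le_conj2 ξ f
    have h2 : ‖f‖ ^ 2 ≤ 1 := by nlinarith [norm_nonneg f, hF f hf]
    linarith
  choose c hc using hex
  refine (Finset.card_le_card_of_injOn c (fun f hf => (hc f hf).1) ?_).trans (mdSet_card u _ T)
  intro f hf g hg hfg
  refine hsep f hf g hg (fun i => ?_)
  have h1 := (hc f hf).2 i
  have h2 := (hc g hg).2 i
  rw [← hfg] at h2
  have : u i (f - g) = u i (f - mirr (c f)) - u i (g - mirr (c f)) := by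
    simp [map_sub]
  rw [this]
  refine (abs_sub _ _).trans ?_
  linarith

end PackInf


/-- The sign of a Boolean. -/
def sg (b : Bool) : ℝ := if b then 1 else -1

lemma sum_cons_bool {k : ℕ} (F : (Fin (k + 1) → Bool) → ℝ) :
    ∑ ε, F ε = ∑ s : Bool, ∑ ε : Fin k → Bool, F (Fin.cons s ε) := by
  rw [← Fintype.sum_prod_type']
  exact (Equiv.sum_comp (Fin.consEquiv (fun _ : Fin (k + 1) => Bool)) F).symm

lemma max_sep {V : Type*} (A : Set V) (R : V → V → Prop) (hrefl : ∀ x, R x x)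
    (hsymm : ∀ x y, R x y → R y x) (M : ℕ)
    (hM : ∀ F : Finset V, (∀ f ∈ F, f ∈ A) → (∀ f ∈ F, ∀ g ∈ F, R f g → f = g) → F.card ≤ M) :
    ∃ F : Finset V, (∀ f ∈ F, f ∈ A) ∧ (∀ f ∈ F, ∀ g ∈ F, R f g → f = g) ∧
      ∀ f ∈ A, ∃ g ∈ F, R f g := by
  classical
  let P : ℕ → Prop := fun m => ∃ F : Finset V, F.card = m ∧ (∀ f ∈ F, f ∈ A) ∧
    (∀ f ∈ F, ∀ g ∈ F, R f g → f = g)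
  have h0 : P 0 := ⟨∅, by simp⟩
  obtain ⟨F, hc, hA, hs⟩ : P (Nat.findGreatest P M) :=
    Nat.findGreatest_spec (P := P) (Nat.zero_le M) h0
  refine ⟨F, hA, hs, fun f hf => ?_⟩
  by_contra hcon
  push Not at hcon
  have hfF : f ∉ F := fun h => hcon f h (hrefl f)
  have hsep : ∀ x ∈ insert f F, ∀ y ∈ insert f F, R x y → x = y := by
    intro x hx y hy hxy
    rcases Finset.mem_insert.1 hx with rfl | hx1 <;> rcases Finset.mem_insert.1 hy with rfl | hy1
    · rfl
    · exact absurd hxy (hcon y hy1)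
    · exact absurd (hsymm _ _ hxy) (hcon x hx1)
    · exact hs x hx1 y hy1 hxy
  have hA' : ∀ x ∈ insert f F, x ∈ A := by
    intro x hx
    rcases Finset.mem_insert.1 hx with rfl | hx
    · exact hf
    · exact hA x hx
  have h1 := hM _ hA' hsep
  have h2 : P (insert f F).card := ⟨_, rfl, hA', hsep⟩
  have h3 := Nat.le_findGreatest h1 h2
  rw [Finset.card_insert_of_notMem hfF, hc] at h3
  omega

section Tilt
variable {V : Type*} [NormedAddCommGroup V] [NormedSpace ℝ V] [FiniteDimensional ℝ V]

lemma tilt_bound {η : ℝ} (hη : 0 < η) (hV : UConv V η) (k : ℕ) (β : Fin k → ℝ)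
    (hβ : ∀ j, |β j| ≤ 1) (b : Fin k → V →L[ℝ] ℝ) (B : Fin k → ℝ)
    (hb : ∀ j v, |b j v| ≤ B j * ‖v‖) (ξ : V →L[ℝ] ℝ) :
    ∑ ε : Fin k → Bool, (∏ j, (1 + sg (ε j) * β j) / 2) *
      conj2 (ξ + ∑ j, (sg (ε j) - β j) • b j) ≤ conj2 ξ + ∑ j, B j ^ 2 / (4 * η) := by
  induction k generalizing ξ with
  | zero => simp
  | succ k ih =>
    rw [sum_cons_bool]
    simp only [Fin.prod_univ_succ, Fin.sum_univ_succ, Fin.cons_zero, Fin.cons_succ]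
    have h1 : ∀ s : Bool, ∑ ε : Fin k → Bool,
        ((1 + sg s * β 0) / 2 * ∏ i : Fin k, (1 + sg (ε i) * β i.succ) / 2) *
        conj2 (ξ + ((sg s - β 0) • b 0 + ∑ i : Fin k, (sg (ε i) - β i.succ) • b i.succ)) ≤
        (1 + sg s * β 0) / 2 * (conj2 ξ + (sg s - β 0) * b 0 (mirr ξ) +
          (sg s - β 0) ^ 2 * (B 0 ^ 2 / (4 * η)) + ∑ j : Fin k, B j.succ ^ 2 / (4 * η)) := by
      intro s
      have hp : 0 ≤ (1 + sg s * β 0) / 2 := by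
        have := abs_le.1 (hβ 0)
        unfold sg
        split_ifs <;> linarith
      simp only [mul_assoc]
      rw [← Finset.mul_sum]
      refine mul_le_mul_of_nonneg_left ?_ hp
      have h2 := ih (fun i => β i.succ) (fun i => hβ _) (fun i => b i.succ) (fun i => B i.succ)
        (fun i => hb _) (ξ + (sg s - β 0) • b 0)
      have h3 := conj2_add_le hη hV ξ ((sg s - β 0) • b 0) (|sg s - β 0| * B 0) (by
        intro v
        simp only [_root_.smul_apply, smul_eq_mul, abs_mul, mul_assoc]
        exact mul_le_mul_of_nonneg_left (hb 0 v) (abs_nonneg _))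
      simp only [_root_.smul_apply, smul_eq_mul, mul_pow, sq_abs] at h3
      simp only [add_assoc] at h2 h3 ⊢
      rw [mul_div_assoc] at h3
      linarith
    refine (Finset.sum_le_sum (fun s _ => h1 s)).trans ?_
    simp only [Fintype.sum_bool, sg, if_true, Bool.false_eq_true, if_false]
    have h4 : 0 ≤ B 0 ^ 2 / (4 * η) := by positivity
    have h5 : 0 ≤ β 0 ^ 2 * (B 0 ^ 2 / (4 * η)) := by positivity
    nlinarith

lemma sum_weight_sq {k : ℕ} (β : Fin k → ℝ) :
    ∑ ε : Fin k → Bool, (∏ j, (1 + sg (ε j) * β j) / 2) ^ 2 =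
      ∏ j, ((1 + β j ^ 2) / 2) := by
  have := (Finset.prod_univ_sum (fun _ : Fin k => (Finset.univ : Finset Bool))
    (fun j s => ((1 + sg s * β j) / 2) ^ 2))
  simp only [Fintype.piFinset_univ] at this
  simp only [← Finset.prod_pow]
  rw [← this]
  refine Finset.prod_congr rfl (fun j _ => ?_)
  simp only [Fintype.sum_bool, sg, if_true, Bool.false_eq_true, if_false]
  ring

lemma sum_weight {k : ℕ} (β : Fin k → ℝ) :
    ∑ ε : Fin k → Bool, (∏ j, (1 + sg (ε j) * β j) / 2) = 1 := by
  have := (Finset.prod_univ_sum (fun _ : Fin k => (Finset.univ : Finset Bool))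
    (fun j s => ((1 + sg s * β j) / 2)))
  simp only [Fintype.piFinset_univ] at this
  rw [← this]
  refine Finset.prod_eq_one (fun j _ => ?_)
  simp only [Fintype.sum_bool, sg, if_true, Bool.false_eq_true, if_false]
  ring

/-- Lower bound for the number of sign patterns in the good event. -/
lemma tilt_event {η : ℝ} (hη : 0 < η) (hV : UConv V η) (k : ℕ) (β : Fin k → ℝ)
    (hβ : ∀ j, |β j| ≤ 1) (b : Fin k → V →L[ℝ] ℝ) (B : Fin k → ℝ)
    (hb : ∀ j v, |b j v| ≤ B j * ‖v‖) {S Q : ℝ} (hS : 0 < S)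
    (hB : ∑ j, B j ^ 2 / (4 * η) ≤ S) (hQ : ∑ j, β j ^ 2 ≤ Q) :
    (2 : ℝ) ^ k * (Real.exp (-Q) / 4) ≤
      ((Finset.univ.filter (fun ε : Fin k → Bool =>
        conj2 (∑ j, (sg (ε j) - β j) • b j) ≤ 2 * S)).card : ℝ) := by
  classical
  set E := Finset.univ.filter (fun ε : Fin k → Bool =>
        conj2 (∑ j, (sg (ε j) - β j) • b j) ≤ 2 * S) with hE
  set W : (Fin k → Bool) → ℝ := fun ε => ∏ j, (1 + sg (ε j) * β j) / 2 with hW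
  have hW0 : ∀ ε, 0 ≤ W ε := by
    intro ε
    refine Finset.prod_nonneg (fun j _ => ?_)
    have := abs_le.1 (hβ j)
    unfold sg
    split_ifs <;> linarith
  have h1 : ∑ ε, W ε * conj2 (∑ j, (sg (ε j) - β j) • b j) ≤ S := by
    have := tilt_bound hη hV k β hβ b B hb 0
    simp only [zero_add, conj2_zero] at this
    exact this.trans hB
  have h2 : ∑ ε ∈ Eᶜ, W ε * (2 * S) ≤ S := by
    refine le_trans ?_ h1
    refine (Finset.sum_le_sum (fun ε hε => ?_)).trans
      (Finset.sum_le_univ_sum_of_nonneg (fun ε => mul_nonneg (hW0 ε) (conj2_nonneg _)))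
    refine mul_le_mul_of_nonneg_left ?_ (hW0 ε)
    simp only [hE, Finset.compl_filter, Finset.mem_filter, Finset.mem_univ, true_and, not_le] at hε
    exact hε.le
  rw [← Finset.sum_mul] at h2
  have h3 : ∑ ε ∈ E, W ε + ∑ ε ∈ Eᶜ, W ε = 1 := by
    rw [Finset.sum_add_sum_compl]; exact sum_weight β
  have h4 : 1 / 2 ≤ ∑ ε ∈ E, W ε := by
    by_contra hc
    push Not at hc
    have : 1 / 2 < ∑ ε ∈ Eᶜ, W ε := by linarith
    nlinarith
  have h5 : (∑ ε ∈ E, W ε) ^ 2 ≤ E.card * ∑ ε ∈ E, W ε ^ 2 := sq_sum_le_card_mul_sum_sq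
  have h6 : ∑ ε ∈ E, W ε ^ 2 ≤ Real.exp Q / 2 ^ k := by
    refine (Finset.sum_le_univ_sum_of_nonneg (fun ε => sq_nonneg _)).trans ?_
    rw [sum_weight_sq]
    rw [Finset.prod_div_distrib, Finset.prod_const, Finset.card_univ, Fintype.card_fin]
    gcongr
    calc ∏ j, (1 + β j ^ 2) ≤ ∏ j, Real.exp (β j ^ 2) := by
          refine Finset.prod_le_prod (fun j _ => by positivity) (fun j _ => ?_)
          have := Real.add_one_le_exp (β j ^ 2)
          linarith
      _ = Real.exp (∑ j, β j ^ 2) := (Real.exp_sum _ _).symm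
      _ ≤ Real.exp Q := Real.exp_le_exp.2 hQ
  have h7 : (1 / 4 : ℝ) ≤ E.card * (Real.exp Q / 2 ^ k) := by
    calc (1 / 4 : ℝ) = (1 / 2) ^ 2 := by norm_num
      _ ≤ (∑ ε ∈ E, W ε) ^ 2 := by gcongr
      _ ≤ _ := h5.trans (by gcongr)
  rw [Real.exp_neg]
  have he := Real.exp_pos Q
  have h2k : (0 : ℝ) < 2 ^ k := by positivity
  calc (2 : ℝ) ^ k * ((Real.exp Q)⁻¹ / 4) = 2 ^ k / Real.exp Q * (1 / 4) := by
        field_simp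
    _ ≤ 2 ^ k / Real.exp Q * (E.card * (Real.exp Q / 2 ^ k)) := by gcongr
    _ = E.card := by field_simp

end Tilt


lemma sum_copies {n m : ℕ} {M : Type*} [AddCommMonoid M] (g : Fin n → M) :
    ∑ j : Fin (n * m), g (finProdFinEquiv.symm j).1 = ∑ i, m • g i := by
  rw [Equiv.sum_comp finProdFinEquiv.symm (fun q : Fin n × Fin m => g q.1),
    Fintype.sum_prod_type]
  simp

section DS
variable {V : Type*} [NormedAddCommGroup V] [NormedSpace ℝ V] [FiniteDimensional ℝ V]

/-- Dual Sudakov type bound. -/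
lemma dual_sudakov {η : ℝ} (hη : 0 < η) (hV : UConv V η) {n : ℕ} (g : Fin n → V →L[ℝ] ℝ)
    (G : Fin n → ℝ) (hg : ∀ i v, |g i v| ≤ G i * ‖v‖) {L a b : ℝ} (hL : 0 < L) (hb : 0 < b)
    (hG : ∑ i, G i ^ 2 ≤ L ^ 2) (F : Finset V) (f0 : V)
    (hF : ∀ f ∈ F, ∑ i, (g i (f - f0)) ^ 2 ≤ a ^ 2)
    (hsep : ∀ f ∈ F, ∀ f' ∈ F, (∀ v, ‖v‖ ≤ 1 → |∑ i, g i (f - f') * g i v| ≤ b) → f = f') :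
    (F.card : ℝ) ≤ 4 * Real.exp (4 * L ^ 2 * a ^ 2 / (η * b ^ 2)) := by
  classical
  set lam : ℝ := 2 * L / (Real.sqrt η * b) with hlam
  have hsη : 0 < Real.sqrt η := Real.sqrt_pos.2 hη
  have hlampos : 0 < lam := by positivity
  have hlam2 : lam ^ 2 = 4 * L ^ 2 / (η * b ^ 2) := by
    rw [hlam, div_pow, mul_pow, mul_pow, Real.sq_sqrt hη.le]; norm_num
  obtain ⟨m, hm⟩ := exists_nat_gt (lam ^ 2 * a ^ 2)
  have hmpos : (0 : ℝ) < m := lt_of_le_of_lt (by positivity) hm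
  have hsm : 0 < Real.sqrt m := Real.sqrt_pos.2 hmpos
  have hsm2 : Real.sqrt m ^ 2 = m := Real.sq_sqrt hmpos.le
  let ix : Fin (n * m) → Fin n := fun j => (finProdFinEquiv.symm j).1
  let bb : Fin (n * m) → V →L[ℝ] ℝ := fun j => (1 / Real.sqrt m) • g (ix j)
  let BB : Fin (n * m) → ℝ := fun j => (1 / Real.sqrt m) * G (ix j)
  let β : V → Fin (n * m) → ℝ := fun f j => lam * g (ix j) (f - f0) / Real.sqrt m
  let E : V → Finset (Fin (n * m) → Bool) := fun f => Finset.univ.filter (fun ε =>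
        conj2 (∑ j, (sg (ε j) - β f j) • bb j) ≤ 2 * (L ^ 2 / (4 * η)))
  have hsumβ : ∀ f ∈ F, ∑ j, β f j ^ 2 ≤ lam ^ 2 * a ^ 2 := by
    intro f hf
    have e : ∀ j, β f j ^ 2 = (fun i => lam ^ 2 * g i (f - f0) ^ 2 / m) (ix j) := by
      intro j
      simp only [β]
      rw [div_pow, mul_pow, hsm2]
    simp only [e]
    rw [show ∑ j, (fun i => lam ^ 2 * g i (f - f0) ^ 2 / m) (ix j) = _ from
      sum_copies (m := m) (fun i => lam ^ 2 * g i (f - f0) ^ 2 / m)]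
    simp only [nsmul_eq_mul]
    have : ∀ i, (m : ℝ) * (lam ^ 2 * g i (f - f0) ^ 2 / m) = lam ^ 2 * g i (f - f0) ^ 2 := by
      intro i; field_simp
    simp only [this]
    rw [← Finset.mul_sum]
    exact mul_le_mul_of_nonneg_left (hF f hf) (by positivity)
  have hsumB : ∑ j, BB j ^ 2 / (4 * η) ≤ L ^ 2 / (4 * η) := by
    have e : ∀ j, BB j ^ 2 / (4 * η) = (fun i => G i ^ 2 / m / (4 * η)) (ix j) := by
      intro j
      simp only [BB]
      rw [mul_pow, div_pow, hsm2]; ring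
    simp only [e]
    rw [show ∑ j, (fun i => G i ^ 2 / m / (4 * η)) (ix j) = _ from
      sum_copies (m := m) (fun i => G i ^ 2 / m / (4 * η))]
    simp only [nsmul_eq_mul]
    have : ∀ i, (m : ℝ) * (G i ^ 2 / m / (4 * η)) = G i ^ 2 / (4 * η) := by
      intro i; field_simp
    simp only [this]
    rw [← Finset.sum_div]
    gcongr
  have hβ1 : ∀ f ∈ F, ∀ j, |β f j| ≤ 1 := by
    intro f hf j
    have h1 : g (ix j) (f - f0) ^ 2 ≤ a ^ 2 :=
      (Finset.single_le_sum (f := fun i => g i (f - f0) ^ 2) (fun i _ => sq_nonneg _)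
        (Finset.mem_univ (ix j))).trans (hF f hf)
    rw [← sq_le_one_iff_abs_le_one]
    simp only [β]
    rw [div_pow, mul_pow, hsm2, div_le_one hmpos]
    nlinarith [sq_nonneg lam]
  have hcard : ∀ f ∈ F, (2 : ℝ) ^ (n * m) * (Real.exp (-(lam ^ 2 * a ^ 2)) / 4) ≤ (E f).card := by
    intro f hf
    refine tilt_event hη hV (n * m) (β f) (hβ1 f hf) bb BB ?_ (by positivity) hsumB (hsumβ f hf)
    intro j v
    simp only [bb, BB, _root_.smul_apply, smul_eq_mul, abs_mul, mul_assoc]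
    rw [abs_of_pos (by positivity : 0 < 1 / Real.sqrt m)]
    exact mul_le_mul_of_nonneg_left (hg _ v) (by positivity)
  have hval : ∀ f, ∀ ε : Fin (n * m) → Bool, ∀ v, (∑ j, (sg (ε j) - β f j) • bb j) v =
      (∑ j, sg (ε j) • bb j) v - lam * ∑ i, g i (f - f0) * g i v := by
    intro f ε v
    rw [_root_.sum_apply, _root_.sum_apply]
    simp only [_root_.smul_apply, smul_eq_mul, sub_mul, Finset.sum_sub_distrib]
    congr 1
    have e : ∀ j, β f j * bb j v = (fun i => lam * (g i (f - f0) * g i v) / m) (ix j) := by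
      intro j
      simp only [β, bb, _root_.smul_apply, smul_eq_mul]
      field_simp
      rw [hsm2]
      ring
    simp only [e]
    rw [show ∑ j, (fun i => lam * (g i (f - f0) * g i v) / m) (ix j) = _ from
      sum_copies (m := m) (fun i => lam * (g i (f - f0) * g i v) / m)]
    simp only [nsmul_eq_mul]
    have : ∀ i, (m : ℝ) * (lam * (g i (f - f0) * g i v) / m) = lam * (g i (f - f0) * g i v) := by
      intro i; field_simp
    simp only [this]
    rw [← Finset.mul_sum]
  have hbd : ∀ f, ∀ ε ∈ E f, ∀ v, ‖v‖ ≤ 1 →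
      |(∑ j, sg (ε j) • bb j) v - lam * ∑ i, g i (f - f0) * g i v| ≤ lam * b / 2 := by
    intro f ε hε v hv
    have h1 := (Finset.mem_filter.1 hε).2
    have h2 := sq_le_conj2 _ v hv |>.trans h1
    rw [hval] at h2
    refine abs_le_of_sq_le_sq ?_ (by positivity)
    have h3 : (lam * b / 2) ^ 2 = L ^ 2 / η := by
      rw [div_pow, mul_pow, hlam2]; field_simp; norm_num
    rw [h3]
    have h4 : 2 * (L ^ 2 / (4 * η)) = L ^ 2 / η / 2 := by field_simp; norm_num
    linarith
  have hdisj : ∀ f ∈ F, ∀ f' ∈ F, f ≠ f' → Disjoint (E f) (E f') := by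
    intro f hf f' hf' hne
    rw [Finset.disjoint_left]
    intro ε h1 h2
    apply hne
    refine hsep f hf f' hf' (fun v hv => ?_)
    have h3 := abs_le.1 (hbd f ε h1 v hv)
    have h4 := abs_le.1 (hbd f' ε h2 v hv)
    have e : ∑ i, g i (f - f') * g i v =
        ∑ i, g i (f - f0) * g i v - ∑ i, g i (f' - f0) * g i v := by
      rw [← Finset.sum_sub_distrib]
      refine Finset.sum_congr rfl (fun i _ => ?_)
      simp only [map_sub]; ring
    rw [e]
    have : |lam * (∑ i, g i (f - f0) * g i v - ∑ i, g i (f' - f0) * g i v)| ≤ lam * b := by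
      rw [abs_le]; constructor <;> linarith [h3.1, h3.2, h4.1, h4.2]
    rw [abs_mul, abs_of_pos hlampos] at this
    exact le_of_mul_le_mul_left this hlampos
  have htot : ∑ f ∈ F, ((E f).card : ℝ) ≤ 2 ^ (n * m) := by
    have h1 : ∑ f ∈ F, (E f).card = (F.biUnion E).card :=
      (Finset.card_biUnion (fun f hf f' hf' hne => hdisj f hf f' hf' hne)).symm
    have h2 : (F.biUnion E).card ≤ 2 ^ (n * m) := by
      refine (Finset.card_le_univ _).trans ?_
      simp
    rw [← h1] at h2
    exact_mod_cast h2
  have h8 : F.card * ((2 : ℝ) ^ (n * m) * (Real.exp (-(lam ^ 2 * a ^ 2)) / 4)) ≤ 2 ^ (n * m) := by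
    refine le_trans ?_ htot
    rw [← nsmul_eq_mul]
    exact Finset.card_nsmul_le_sum _ _ _ hcard
  have h9 : (F.card : ℝ) * (Real.exp (-(lam ^ 2 * a ^ 2)) / 4) ≤ 1 := by
    have : (0 : ℝ) < 2 ^ (n * m) := by positivity
    nlinarith
  rw [show 4 * L ^ 2 * a ^ 2 / (η * b ^ 2) = lam ^ 2 * a ^ 2 by rw [hlam2]; ring]
  rw [Real.exp_neg] at h9
  have he := Real.exp_pos (lam ^ 2 * a ^ 2)
  have : (F.card : ℝ) * ((Real.exp (lam ^ 2 * a ^ 2))⁻¹ / 4) =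
    F.card / (4 * Real.exp (lam ^ 2 * a ^ 2)) := by field_simp
  rw [this, div_le_one (by positivity)] at h9
  exact h9

/-- Euclidean packing bound. -/
lemma pack_two {η : ℝ} (hη : 0 < η) (hη1 : η ≤ 1) (hV : UConv V η) {n : ℕ}
    (g : Fin n → V →L[ℝ] ℝ)
    (G : Fin n → ℝ) (hg : ∀ i v, |g i v| ≤ G i * ‖v‖) {L : ℝ} (hL : 0 < L)
    (hG : ∑ i, G i ^ 2 ≤ L ^ 2) (j : ℕ) : ∀ a : ℝ, 0 < a → 2 * L ≤ 2 ^ j * a →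
    ∀ F : Finset V, (∀ f ∈ F, ‖f‖ ≤ 1) →
    (∀ f ∈ F, ∀ f' ∈ F, ∑ i, (g i (f - f')) ^ 2 ≤ a ^ 2 → f = f') →
    (F.card : ℝ) ≤ Real.exp (100 * L ^ 2 / (η * a ^ 2)) := by
  classical
  have hbase : ∀ a : ℝ, 0 < a → 2 * L ≤ a →
    ∀ F : Finset V, (∀ f ∈ F, ‖f‖ ≤ 1) →
    (∀ f ∈ F, ∀ f' ∈ F, ∑ i, (g i (f - f')) ^ 2 ≤ a ^ 2 → f = f') →
    (F.card : ℝ) ≤ Real.exp (100 * L ^ 2 / (η * a ^ 2)) := by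
    intro a ha hLa F hF hsep
    have h1 : F.card ≤ 1 := by
      rw [Finset.card_le_one]
      intro f hf f' hf'
      refine hsep f hf f' hf' ?_
      have hn : ‖f - f'‖ ≤ 2 := (norm_sub_le _ _).trans (by linarith [hF f hf, hF f' hf'])
      calc ∑ i, (g i (f - f')) ^ 2 ≤ ∑ i, G i ^ 2 * ‖f - f'‖ ^ 2 := by
            refine Finset.sum_le_sum (fun i _ => ?_)
            rw [← mul_pow, ← sq_abs]
            have := hg i (f - f')
            gcongr
        _ = (∑ i, G i ^ 2) * ‖f - f'‖ ^ 2 := by rw [Finset.sum_mul]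
        _ ≤ L ^ 2 * 2 ^ 2 := by gcongr
        _ = (2 * L) ^ 2 := by ring
        _ ≤ a ^ 2 := by gcongr
    calc (F.card : ℝ) ≤ 1 := by exact_mod_cast h1
      _ ≤ _ := Real.one_le_exp (by positivity)
  induction j with
  | zero =>
    intro a ha hLa
    exact hbase a ha (by simpa using hLa)
  | succ j ih =>
    intro a ha hLa F hF hsep
    by_cases hc : 2 * L ≤ a
    · exact hbase a ha hc F hF hsep
    push Not at hc
    let R : V → V → Prop := fun x y => ∑ i, (g i (x - y)) ^ 2 ≤ (2 * a) ^ 2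
    obtain ⟨F', hF'F, hF'sep, hcov⟩ := max_sep (F : Set V) R
      (fun x => by simp only [R, sub_self, map_zero]; simp; positivity)
      (fun x y h => by
        simp only [R] at h ⊢
        refine le_of_eq_of_le (Finset.sum_congr rfl (fun i _ => ?_)) h
        rw [← neg_sub, map_neg, neg_sq]) F.card
      (fun F1 h1 _ => Finset.card_le_card (fun x hx => h1 x hx))
    have hF'card := ih (2 * a) (by positivity) (by rw [pow_succ] at hLa; linarith) F'
      (fun f hf => hF f (hF'F f hf)) hF'sep
    have hcov' : ∀ f : V, ∃ y, f ∈ F → y ∈ F' ∧ R f y := by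
      intro f
      by_cases hf : f ∈ F
      · obtain ⟨y, hy, h⟩ := hcov f hf
        exact ⟨y, fun _ => ⟨hy, h⟩⟩
      · exact ⟨0, fun h => absurd h hf⟩
    choose pr hpr using hcov'
    have hfib : ∀ y ∈ F', ((F.filter (fun f => pr f = y)).card : ℝ) ≤
        4 * Real.exp (4 * L ^ 2 * (2 * a) ^ 2 / (η * (a ^ 2 / 2) ^ 2)) := by
      intro y hy
      refine dual_sudakov hη hV g G hg hL (by positivity) hG _ y ?_ ?_
      · intro f hf
        obtain ⟨h1, h2⟩ := Finset.mem_filter.1 hf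
        rw [← h2]
        exact (hpr f h1).2
      · intro f hf f' hf' h
        have h1 := (Finset.mem_filter.1 hf).1
        have h1' := (Finset.mem_filter.1 hf').1
        refine hsep f h1 f' h1' ?_
        have h2 := h ((1 / 2 : ℝ) • (f - f')) (by
          rw [norm_smul]
          have : ‖f - f'‖ ≤ 2 := (norm_sub_le _ _).trans (by linarith [hF f h1, hF f' h1'])
          norm_num
          linarith)
        simp only [map_smul, smul_eq_mul] at h2
        have h3 := (le_abs_self _).trans h2
        have e : ∑ i, g i (f - f') * (1 / 2 * g i (f - f')) = (∑ i, g i (f - f') ^ 2) / 2 := by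
          rw [Finset.sum_div]
          exact Finset.sum_congr rfl (fun i _ => by ring)
        rw [e] at h3
        linarith
    have hsum : F.card = ∑ y ∈ F', (F.filter (fun f => pr f = y)).card :=
      Finset.card_eq_sum_card_fiberwise (fun f hf => (hpr f hf).1)
    have h4 : (4 : ℝ) ≤ Real.exp (6 * L ^ 2 / (η * a ^ 2)) := by
      have h5 : (3 / 2 : ℝ) ≤ 6 * L ^ 2 / (η * a ^ 2) := by
        rw [le_div_iff₀ (by positivity)]
        have : a ^ 2 ≤ (2 * L) ^ 2 := by gcongr
        nlinarith [sq_nonneg a]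
      have h6 : (4 : ℝ) ≤ Real.exp (3 / 2) := by
        have h7 : Real.exp (3 / 2) ^ 2 = Real.exp 1 ^ 3 := by
          rw [← Real.exp_nat_mul, ← Real.exp_nat_mul]; norm_num
        have h8 : (2.7 : ℝ) ^ 3 ≤ Real.exp 1 ^ 3 := by
          have := Real.exp_one_gt_d9
          gcongr
          linarith
        have h9 : (0 : ℝ) < Real.exp (3 / 2) := Real.exp_pos _
        nlinarith
      exact h6.trans (Real.exp_le_exp.2 h5)
    have hx : 0 ≤ L ^ 2 / (η * a ^ 2) := by positivity
    calc (F.card : ℝ) = ∑ y ∈ F', ((F.filter (fun f => pr f = y)).card : ℝ) := by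
          rw [hsum]; push_cast; rfl
      _ ≤ F'.card * (4 * Real.exp (4 * L ^ 2 * (2 * a) ^ 2 / (η * (a ^ 2 / 2) ^ 2))) := by
          rw [← nsmul_eq_mul]
          exact Finset.sum_le_card_nsmul _ _ _ hfib
      _ ≤ Real.exp (100 * L ^ 2 / (η * (2 * a) ^ 2)) * (Real.exp (6 * L ^ 2 / (η * a ^ 2)) *
          Real.exp (4 * L ^ 2 * (2 * a) ^ 2 / (η * (a ^ 2 / 2) ^ 2))) := by gcongr
      _ = Real.exp (95 * (L ^ 2 / (η * a ^ 2))) := by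
          rw [← Real.exp_add, ← Real.exp_add]
          congr 1
          field_simp
          ring
      _ ≤ _ := by
          apply Real.exp_le_exp.2
          rw [mul_div_assoc]
          linarith

lemma pack_two' {η : ℝ} (hη : 0 < η) (hη1 : η ≤ 1) (hV : UConv V η) {n : ℕ}
    (g : Fin n → V →L[ℝ] ℝ)
    (G : Fin n → ℝ) (hg : ∀ i v, |g i v| ≤ G i * ‖v‖) {L : ℝ} (hL : 0 < L)
    (hG : ∑ i, G i ^ 2 ≤ L ^ 2) (a : ℝ) (ha : 0 < a)
    (F : Finset V) (hF : ∀ f ∈ F, ‖f‖ ≤ 1)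
    (hsep : ∀ f ∈ F, ∀ f' ∈ F, ∑ i, (g i (f - f')) ^ 2 ≤ a ^ 2 → f = f') :
    (F.card : ℝ) ≤ Real.exp (100 * L ^ 2 / (η * a ^ 2)) := by
  obtain ⟨j, hj⟩ := pow_unbounded_of_one_lt (2 * L / a) (by norm_num : (1 : ℝ) < 2)
  rw [div_lt_iff₀ ha] at hj
  exact pack_two hη hη1 hV g G hg hL hG j a ha hj.le F hF hsep

end DS


/-- Signed square. -/
noncomputable def ss (t : ℝ) : ℝ := t * |t|

lemma ss_mono : Monotone ss := by
  intro x y h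
  unfold ss
  rcases le_total 0 x with hx | hx <;> rcases le_total 0 y with hy | hy
  · rw [abs_of_nonneg hx, abs_of_nonneg hy]; nlinarith
  · have : x = y := by linarith
    rw [this]
  · rw [abs_of_nonpos hx, abs_of_nonneg hy]; nlinarith
  · rw [abs_of_nonpos hx, abs_of_nonpos hy]; nlinarith

lemma ss_cont : Continuous ss := by unfold ss; fun_prop

lemma ss_lower (x y : ℝ) : |x ^ 2 - y ^ 2| ≤ |ss x - ss y| := by
  unfold ss
  rw [abs_le]
  rcases le_total 0 x with hx | hx <;> rcases le_total 0 y with hy | hy <;>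
  simp only [abs_of_nonneg, abs_of_nonpos, hx, hy] <;>
  [skip; rw [abs_of_nonneg (by nlinarith)]; rw [abs_of_nonpos (a := x * -x - y * y) (by nlinarith)];
    skip]
  · have h1 := neg_abs_le (x * x - y * y)
    have h2 := le_abs_self (x * x - y * y)
    constructor <;> nlinarith
  · constructor <;> nlinarith [sq_nonneg x, sq_nonneg y]
  · constructor <;> nlinarith [sq_nonneg x, sq_nonneg y]
  · have h1 := neg_abs_le (x * -x - y * -y)
    have h2 := le_abs_self (x * -x - y * -y)
    constructor <;> nlinarith

lemma ss_upper (x y : ℝ) : |ss x - ss y| ≤ |x - y| * (|x| + |y|) := by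
  have key : ∀ x y : ℝ, x ≤ y → |ss x - ss y| ≤ |x - y| * (|x| + |y|) := by
    intro x y h
    rw [abs_of_nonpos (by linarith [ss_mono h]), abs_of_nonpos (by linarith : x - y ≤ 0)]
    unfold ss
    rcases le_total 0 x with hx | hx <;> rcases le_total 0 y with hy | hy <;>
    simp only [abs_of_nonneg, abs_of_nonpos, hx, hy] <;> nlinarith
  rcases le_total x y with h | h
  · exact key x y h
  · have := key y x h
    rw [abs_sub_comm, abs_sub_comm x y, add_comm]
    exact this

lemma ss_mid (x y z : ℝ) : (ss x - ss (1 / 2 * (y + z))) ^ 2 ≤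
    (ss x - ss y) ^ 2 + (ss x - ss z) ^ 2 := by
  have key : ∀ y z : ℝ, y ≤ z → (ss x - ss (1 / 2 * (y + z))) ^ 2 ≤
    (ss x - ss y) ^ 2 + (ss x - ss z) ^ 2 := by
    intro y z h
    have h1 : ss y ≤ ss (1 / 2 * (y + z)) := ss_mono (by linarith)
    have h2 : ss (1 / 2 * (y + z)) ≤ ss z := ss_mono (by linarith)
    rcases le_total (ss x) (ss (1 / 2 * (y + z))) with h3 | h3
    · nlinarith [sq_nonneg (ss x - ss y)]
    · nlinarith [sq_nonneg (ss x - ss z)]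
  rcases le_total y z with h | h
  · exact key y z h
  · have := key z y h
    rw [add_comm y z]; linarith

lemma le_of_sq2 {a b : ℝ} (h : a ^ 2 ≤ b ^ 2) (hb : 0 ≤ b) : a ≤ b :=
  (le_abs_self a).trans (abs_le_of_sq_le_sq h hb)

lemma l2_mono {n : ℕ} (a b : EuclideanSpace ℝ (Fin n)) (h : ∀ i, |a i| ≤ b i) :
    ‖a‖ ≤ ‖b‖ := by
  rw [EuclideanSpace.norm_eq, EuclideanSpace.norm_eq]
  apply Real.sqrt_le_sqrt
  refine Finset.sum_le_sum (fun i _ => ?_)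
  simp only [Real.norm_eq_abs, sq_abs]
  rw [← sq_abs]
  have := h i
  gcongr

section Metric
variable {V : Type*} [NormedAddCommGroup V] [NormedSpace ℝ V] [FiniteDimensional ℝ V]

/-- The embedding defining the chaining metric. -/
noncomputable def Phi {n : ℕ} (u : Fin n → V →L[ℝ] ℝ) (f : V) : EuclideanSpace ℝ (Fin n) :=
  WithLp.toLp 2 (fun i => ss (u i f))

/-- The chaining metric. -/
noncomputable def Dl {n : ℕ} (u : Fin n → V →L[ℝ] ℝ) (f g : V) : ℝ := dist (Phi u f) (Phi u g)

variable {n : ℕ} (u : Fin n → V →L[ℝ] ℝ)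

lemma Dl_nonneg (f g : V) : 0 ≤ Dl u f g := dist_nonneg
lemma Dl_self (f : V) : Dl u f f = 0 := dist_self _
lemma Dl_comm (f g : V) : Dl u f g = Dl u g f := dist_comm _ _
lemma Dl_tri (f g h : V) : Dl u f h ≤ Dl u f g + Dl u g h := dist_triangle _ _ _

lemma Phi_cont : Continuous (Phi u) := by
  unfold Phi
  have : Continuous (fun f : V => (fun i => ss (u i f))) :=
    continuous_pi (fun i => ss_cont.comp (u i).continuous)
  exact (PiLp.continuous_toLp 2 _).comp this

lemma Dl_cont (f : V) : Continuous (fun y => Dl u f y) := by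
  unfold Dl
  exact Continuous.dist continuous_const (Phi_cont u)

lemma Dl_sq (f g : V) : Dl u f g ^ 2 = ∑ i, (ss (u i f) - ss (u i g)) ^ 2 := by
  unfold Dl
  rw [EuclideanSpace.dist_eq, Real.sq_sqrt (by positivity)]
  simp [Phi, Real.dist_eq, sq_abs]

lemma Dl_mid (f y z : V) : Dl u f ((1 / 2 : ℝ) • (y + z)) ≤ Dl u f y + Dl u f z := by
  refine le_of_sq2 ?_ (add_nonneg (Dl_nonneg u _ _) (Dl_nonneg u _ _))
  have h1 : Dl u f ((1 / 2 : ℝ) • (y + z)) ^ 2 ≤ Dl u f y ^ 2 + Dl u f z ^ 2 := by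
    rw [Dl_sq, Dl_sq, Dl_sq, ← Finset.sum_add_distrib]
    refine Finset.sum_le_sum (fun i _ => ?_)
    rw [map_smul, map_add, smul_eq_mul]
    exact ss_mid _ _ _
  nlinarith [Dl_nonneg u f y, Dl_nonneg u f z]

lemma Dl_zero {L : ℝ} (hL : 0 < L) (h2 : ∀ v, ∑ i, (u i v) ^ 2 ≤ ‖v‖ ^ 2)
    (h3 : ∀ i v, |u i v| ≤ L * ‖v‖) (f : V) (hf : ‖f‖ ≤ 1) : Dl u f 0 ≤ L := by
  refine le_of_sq2 ?_ hL.le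
  rw [Dl_sq]
  have h1 : ‖f‖ ^ 2 ≤ 1 := by nlinarith [norm_nonneg f]
  calc ∑ i, (ss (u i f) - ss (u i 0)) ^ 2 ≤ ∑ i, L ^ 2 * (u i f) ^ 2 := by
        refine Finset.sum_le_sum (fun i _ => ?_)
        simp only [map_zero, ss, zero_mul, sub_zero, mul_pow, sq_abs]
        have : u i f ^ 2 ≤ L ^ 2 := by
          rw [← sq_abs]
          have := (h3 i f).trans (mul_le_mul_of_nonneg_left hf hL.le)
          rw [mul_one] at this
          gcongr
        nlinarith [sq_nonneg (u i f)]
    _ = L ^ 2 * ∑ i, (u i f) ^ 2 := by rw [Finset.mul_sum]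
    _ ≤ L ^ 2 * 1 := by
        have := (h2 f).trans h1
        gcongr
    _ = L ^ 2 := by ring

lemma Dl_diam {L : ℝ} (hL : 0 < L) (h2 : ∀ v, ∑ i, (u i v) ^ 2 ≤ ‖v‖ ^ 2)
    (h3 : ∀ i v, |u i v| ≤ L * ‖v‖) (f g : V) (hf : ‖f‖ ≤ 1) (hg : ‖g‖ ≤ 1) :
    Dl u f g ≤ 2 * L := by
  have h := Dl_tri u f 0 g
  rw [Dl_comm u 0 g] at h
  linarith [Dl_zero u hL h2 h3 f hf, Dl_zero u hL h2 h3 g hg]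

/-- Local comparison of the chaining metric with a weighted Euclidean metric. -/
lemma Dl_local (h2 : ∀ v, ∑ i, (u i v) ^ 2 ≤ ‖v‖ ^ 2) (zs p p' : V) {x a r : ℝ} (hx : 0 ≤ x)
    (ha : 0 ≤ a) (hr : 0 ≤ r)
    (hp : ‖p‖ ≤ 1) (hp' : ‖p'‖ ≤ 1) (hD : ∑ i, (u i zs * u i (p - p')) ^ 2 ≤ a ^ 2)
    (hI : ∀ i, |u i (p - p')| ≤ r) :
    Dl u (zs + x • p) (zs + x • p') ≤ 2 * a * x + 2 * r * x ^ 2 := by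
  let A : EuclideanSpace ℝ (Fin n) := WithLp.toLp 2 (fun i => |u i zs * u i (p - p')|)
  let B : V → EuclideanSpace ℝ (Fin n) := fun p => WithLp.toLp 2 (fun i => |u i p|)
  have hA : ‖A‖ ≤ a := by
    refine le_of_sq2 ?_ ha
    rw [EuclideanSpace.norm_sq_eq]
    simp only [A, Real.norm_eq_abs, abs_abs, sq_abs]
    exact hD
  have hB : ∀ p : V, ‖p‖ ≤ 1 → ‖B p‖ ≤ 1 := by
    intro p hp
    refine le_of_sq2 ?_ zero_le_one
    rw [EuclideanSpace.norm_sq_eq]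
    have := h2 p
    have h1 : ‖p‖ ^ 2 ≤ 1 := by nlinarith [norm_nonneg p]
    simp only [B, Real.norm_eq_abs, abs_abs, sq_abs]
    linarith
  have h1 : Dl u (zs + x • p) (zs + x • p') ≤
      ‖(2 * x) • A + (r * x ^ 2) • B p + (r * x ^ 2) • B p'‖ := by
    unfold Dl
    rw [dist_eq_norm]
    refine l2_mono _ _ (fun i => ?_)
    simp only [Phi, PiLp.sub_apply, PiLp.add_apply, PiLp.smul_apply, smul_eq_mul, A, B]
    refine (ss_upper _ _).trans ?_
    have e : u i (zs + x • p) - u i (zs + x • p') = x * u i (p - p') := by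
      simp [map_sub]; ring
    rw [e, abs_mul, abs_of_nonneg hx]
    have h4 : ∀ p : V, |u i (zs + x • p)| ≤ |u i zs| + x * |u i p| := by
      intro p
      rw [map_add, map_smul, smul_eq_mul]
      refine (abs_add_le _ _).trans ?_
      rw [abs_mul, abs_of_nonneg hx]
    have h5 := h4 p
    have h6 := h4 p'
    rw [abs_mul]
    have h7 : x * |u i (p - p')| * (|u i (zs + x • p)| + |u i (zs + x • p')|) ≤
      x * |u i (p - p')| * ((|u i zs| + x * |u i p|) + (|u i zs| + x * |u i p'|)) := by
      gcongr
    refine h7.trans ?_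
    have h8 : x * |u i (p - p')| * (x * (|u i p| + |u i p'|)) ≤
        x * r * (x * (|u i p| + |u i p'|)) := by
      have := hI i
      gcongr
    nlinarith
  refine h1.trans ?_
  refine (norm_add₃_le).trans ?_
  rw [norm_smul, norm_smul, norm_smul, Real.norm_of_nonneg (by positivity),
    Real.norm_of_nonneg (by positivity)]
  have := hB p hp
  have := hB p' hp'
  calc 2 * x * ‖A‖ + r * x ^ 2 * ‖B p‖ + r * x ^ 2 * ‖B p'‖
      ≤ 2 * x * a + r * x ^ 2 * 1 + r * x ^ 2 * 1 := by gcongr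
    _ = _ := by ring

lemma exists_kmin (t : ℝ) (f : V) : ∃ z : V, ‖z‖ ≤ 1 ∧ ∀ y : V, ‖y‖ ≤ 1 →
    ‖z‖ ^ 2 + t * Dl u f z ≤ ‖y‖ ^ 2 + t * Dl u f y := by
  have : ProperSpace V := FiniteDimensional.proper ℝ V
  have hc : IsCompact (Metric.closedBall (0 : V) 1) := isCompact_closedBall _ _
  have hcont : Continuous (fun v : V => ‖v‖ ^ 2 + t * Dl u f v) := by
    have := Dl_cont u f
    fun_prop
  obtain ⟨z, hz, hmin⟩ := hc.exists_isMinOn ⟨0, by simp⟩ hcont.continuousOn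
  refine ⟨z, by simpa using hz, fun y hy => hmin (by simpa using hy)⟩

/-- The minimizer in the K-functional. -/
noncomputable def kz (t : ℝ) (f : V) : V := Classical.choose (exists_kmin u t f)

/-- The distance to the minimizer. -/
noncomputable def ks (t : ℝ) (f : V) : ℝ := Dl u f (kz u t f)

lemma kz_norm (t : ℝ) (f : V) : ‖kz u t f‖ ≤ 1 := (Classical.choose_spec (exists_kmin u t f)).1

lemma kz_min (t : ℝ) (f y : V) (hy : ‖y‖ ≤ 1) :
    ‖kz u t f‖ ^ 2 + t * ks u t f ≤ ‖y‖ ^ 2 + t * Dl u f y :=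
  (Classical.choose_spec (exists_kmin u t f)).2 y hy

lemma ks_nonneg (t : ℝ) (f : V) : 0 ≤ ks u t f := Dl_nonneg u _ _

lemma ks_sum {τ : ℝ} (hτ : 0 < τ) (f : V) (hf : ‖f‖ ≤ 1) (N : ℕ) :
    ∑ k ∈ Finset.range N, τ * 2 ^ k * ks u (τ * 2 ^ k) f ≤ 2 := by
  have h1 : ∀ N : ℕ, ∑ k ∈ Finset.range (N + 1), τ * 2 ^ k * ks u (τ * 2 ^ k) f ≤
      2 * (‖kz u (τ * 2 ^ N) f‖ ^ 2 + τ * 2 ^ N * ks u (τ * 2 ^ N) f) := by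
    intro N
    induction N with
    | zero =>
      simp only [zero_add, Finset.sum_range_one, pow_zero, mul_one]
      nlinarith [sq_nonneg ‖kz u τ f‖, mul_nonneg hτ.le (ks_nonneg u τ f)]
    | succ N ih =>
      rw [Finset.sum_range_succ]
      have h := kz_min u (τ * 2 ^ N) f (kz u (τ * 2 ^ (N + 1)) f) (kz_norm u _ _)
      rw [show Dl u f (kz u (τ * 2 ^ (N + 1)) f) = ks u (τ * 2 ^ (N + 1)) f from rfl] at h
      have e : τ * 2 ^ (N + 1) = 2 * (τ * 2 ^ N) := by ring
      have : τ * 2 ^ (N + 1) * ks u (τ * 2 ^ (N + 1)) f =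
        2 * (τ * 2 ^ N * ks u (τ * 2 ^ (N + 1)) f) := by
        rw [← mul_assoc, ← e]
      linarith
  cases N with
  | zero => simp
  | succ N =>
    refine (h1 N).trans ?_
    have := kz_min u (τ * 2 ^ N) f f hf
    rw [Dl_self] at this
    have h2 : ‖f‖ ^ 2 ≤ 1 := by nlinarith [norm_nonneg f]
    linarith

lemma kz_stable {η t D s : ℝ} (hV : UConv V η) (ht : 0 ≤ t) (f g : V)
    (hD : Dl u f g ≤ D) (hf : ks u t f ≤ s) (hg : ks u t g ≤ s) :
    η * ‖kz u t f - kz u t g‖ ^ 2 ≤ t * (D + s) := by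
  set z := kz u t f with hz
  set z' := kz u t g with hz'
  set y := (1 / 2 : ℝ) • (z + z') with hy
  have hzn : ‖z‖ ≤ 1 := kz_norm u t f
  have hzn' : ‖z'‖ ≤ 1 := kz_norm u t g
  have hyn : ‖y‖ ≤ 1 := by
    rw [hy, norm_smul]
    have := norm_add_le z z'
    norm_num
    linarith
  have h1 := kz_min u t f y hyn
  have h2 := kz_min u t g y hyn
  rw [← hz] at h1
  rw [← hz'] at h2
  have h3 : Dl u f y ≤ Dl u f z + Dl u f z' := Dl_mid u f z z'
  have h4 : Dl u g y ≤ Dl u g z + Dl u g z' := Dl_mid u g z z'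
  have h5 : Dl u f z' ≤ D + Dl u g z' := (Dl_tri u f g z').trans (by linarith)
  have h6 : Dl u g z ≤ D + Dl u f z := by
    have := Dl_tri u g f z
    rw [Dl_comm u g f] at this
    linarith
  have h7 := hV z z'
  rw [← hy] at h7
  have e1 : Dl u f z = ks u t f := rfl
  have e2 : Dl u g z' = ks u t g := rfl
  rw [e1] at h3 h6
  rw [e2] at h4 h5
  have h8 : t * Dl u f y ≤ t * (D + ks u t f + ks u t g) :=
    mul_le_mul_of_nonneg_left (by linarith) ht
  have h9 : t * Dl u g y ≤ t * (D + ks u t f + ks u t g) :=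
    mul_le_mul_of_nonneg_left (by linarith) ht
  have h10 : t * ks u t f ≤ t * s := mul_le_mul_of_nonneg_left hf ht
  have h11 : t * ks u t g ≤ t * s := mul_le_mul_of_nonneg_left hg ht
  nlinarith

end Metric


lemma code_exists {W : Type*} (A : Set W) (R : W → W → Prop) (hrefl : ∀ x, R x x)
    (hsymm : ∀ x y, R x y → R y x) (M : ℕ) (hM1 : 1 ≤ M)
    (hM : ∀ F : Finset W, (∀ f ∈ F, f ∈ A) → (∀ f ∈ F, ∀ g ∈ F, R f g → f = g) → F.card ≤ M) :
    ∃ c : W → Fin M, ∀ f ∈ A, ∀ g ∈ A, c f = c g → ∃ y, R f y ∧ R g y := by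
  classical
  obtain ⟨F, hFA, hFs, hcov⟩ := max_sep A R hrefl hsymm M hM
  have hc := hM F hFA hFs
  have hex : ∀ f : W, ∃ j : Fin M, f ∈ A → ∃ y : F, R f y ∧ j = Fin.castLE hc (F.equivFin y) := by
    intro f
    by_cases hf : f ∈ A
    · obtain ⟨y, hy, h⟩ := hcov f hf
      exact ⟨_, fun _ => ⟨⟨y, hy⟩, h, rfl⟩⟩
    · exact ⟨⟨0, hM1⟩, fun h => absurd h hf⟩
  choose c hcc using hex
  refine ⟨c, fun f hf g hg hfg => ?_⟩
  obtain ⟨y, h1, h2⟩ := hcc f hf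
  obtain ⟨y', h1', h2'⟩ := hcc g hg
  rw [h2, h2'] at hfg
  have : y = y' := F.equivFin.injective (Fin.castLE_injective hc hfg)
  subst this
  exact ⟨y, h1, h1'⟩

section Step
variable {V : Type*} [NormedAddCommGroup V] [NormedSpace ℝ V] [FiniteDimensional ℝ V]
variable {n : ℕ} (u : Fin n → V →L[ℝ] ℝ)

lemma layer_code {η L : ℝ} (hη : 0 < η) (hη1 : η ≤ 1) (hV : UConv V η) (hL : 0 < L)
    (h2 : ∀ v, ∑ i, (u i v) ^ 2 ≤ ‖v‖ ^ 2) (h3 : ∀ i v, |u i v| ≤ L * ‖v‖)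
    (A : Set V) {D s t a r x : ℝ} (ht : 0 ≤ t)
    (ha : 0 < a) (hr : 0 < r) (hx : 0 < x) (hxt : t * (D + s) ≤ η * x ^ 2)
    (hdiam : ∀ f ∈ A, ∀ g ∈ A, Dl u f g ≤ D) (hs : ∀ f ∈ A, ks u t f ≤ s)
    (N : ℕ) (hN : N = ⌊Real.exp (100 * L ^ 2 / (η * a ^ 2))⌋₊)
    (T : ℕ) (hT : 1 / 2 < T * (η * r ^ 2 / L ^ 2)) :
    ∃ c : V → Fin N × Fin ((2 * n + 1) ^ T), ∀ f ∈ A, ∀ g ∈ A, c f = c g →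
      Dl u (kz u t f) (kz u t g) ≤ 4 * a * x + 8 * r * x ^ 2 := by
  have hN1 : 1 ≤ N := by
    rw [hN, Nat.one_le_floor_iff]
    exact Real.one_le_exp (by positivity)
  have hN2 : 1 ≤ (2 * n + 1) ^ T := Nat.one_le_pow _ _ (by omega)
  rcases A.eq_empty_or_nonempty with rfl | ⟨f0, hf0⟩
  · exact ⟨fun _ => (⟨0, hN1⟩, ⟨0, hN2⟩), by simp⟩
  set zs := kz u t f0 with hzs
  have hzsn : ‖zs‖ ≤ 1 := kz_norm u t f0
  let R1 : V → V → Prop := fun v v' => ∑ i, (u i zs * u i (v - v')) ^ 2 ≤ a ^ 2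
  let R2 : V → V → Prop := fun v v' => ∀ i, |u i (v - v')| ≤ 2 * r
  obtain ⟨c1, hc1⟩ := code_exists (Metric.closedBall (0 : V) 1) R1
    (fun v => by simp only [R1, sub_self, map_zero]; simp; positivity)
    (fun v v' h => by
      simp only [R1] at h ⊢
      refine le_of_eq_of_le (Finset.sum_congr rfl (fun i _ => ?_)) h
      rw [← neg_sub, map_neg, mul_neg, neg_sq]) N hN1 (by
    intro F hF hsep
    rw [hN]
    apply Nat.le_floor
    refine pack_two' hη hη1 hV (fun i => u i zs • u i) (fun i => |u i zs| * L) ?_ hL ?_ a ha F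
      (fun f hf => by simpa using hF f hf) (fun f hf f' hf' h => hsep f hf f' hf' ?_)
    · intro i v
      simp only [_root_.smul_apply, smul_eq_mul, abs_mul, mul_assoc]
      exact mul_le_mul_of_nonneg_left (h3 i v) (abs_nonneg _)
    · simp only [mul_pow, sq_abs]
      rw [← Finset.sum_mul]
      have h4 := h2 zs
      have : ‖zs‖ ^ 2 ≤ 1 := by nlinarith [norm_nonneg zs]
      nlinarith [sq_nonneg L]
    · simpa only [_root_.smul_apply, smul_eq_mul] using h)
  obtain ⟨c2, hc2⟩ := code_exists (Metric.closedBall (0 : V) 1) R2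
    (fun v i => by simp; positivity)
    (fun v v' h i => by rw [← neg_sub, map_neg, abs_neg]; exact h i) _ hN2 (by
    intro F hF hsep
    exact pack_inf u hη hL hr hV h3 T hT F (fun f hf => by simpa using hF f hf) hsep)
  let p : V → V := fun f => x⁻¹ • (kz u t f - zs)
  have hp : ∀ f ∈ A, ‖p f‖ ≤ 1 := by
    intro f hf
    have h5 := kz_stable u hV ht f f0 (hdiam f hf f0 hf0) (hs f hf) (hs f0 hf0)
    rw [← hzs] at h5
    have h6 : ‖kz u t f - zs‖ ≤ x := by
      refine le_of_sq2 ?_ hx.le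
      exact le_of_mul_le_mul_left (h5.trans hxt) hη
    simp only [p]
    rw [norm_smul, norm_inv, Real.norm_of_nonneg hx.le, inv_mul_le_iff₀ hx, mul_one]
    exact h6
  have hpe : ∀ f, kz u t f = zs + x • p f := by
    intro f
    simp only [p]
    rw [smul_inv_smul₀ hx.ne']
    abel
  refine ⟨fun f => (c1 (p f), c2 (p f)), fun f hf g hg hfg => ?_⟩
  obtain ⟨e1, e2⟩ := Prod.mk.inj hfg
  obtain ⟨y, hy1, hy2⟩ := hc1 _ (by simpa using hp f hf) _ (by simpa using hp g hg) e1
  obtain ⟨y', hy1', hy2'⟩ := hc2 _ (by simpa using hp f hf) _ (by simpa using hp g hg) e2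
  rw [hpe f, hpe g]
  have := Dl_local u h2 zs (p f) (p g) (a := 2 * a) (r := 4 * r) hx.le (by positivity)
    (by positivity) (hp f hf) (hp g hg) (by
      calc ∑ i, (u i zs * u i (p f - p g)) ^ 2 ≤
          ∑ i, (2 * (u i zs * u i (p f - y)) ^ 2 + 2 * (u i zs * u i (p g - y)) ^ 2) := by
            refine Finset.sum_le_sum (fun i _ => ?_)
            simp only [map_sub]
            nlinarith [sq_nonneg (u i zs * (u i (p f) - u i y) + u i zs * (u i (p g) - u i y))]
        _ ≤ (2 * a) ^ 2 := by
            rw [Finset.sum_add_distrib, ← Finset.mul_sum, ← Finset.mul_sum]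
            simp only [R1] at hy1 hy2
            nlinarith) (by
      intro i
      have h7 := abs_le.1 (hy1' i)
      have h8 := abs_le.1 (hy2' i)
      simp only [map_sub] at h7 h8 ⊢
      rw [abs_le]
      constructor <;> linarith [h7.1, h7.2, h8.1, h8.2])
  linarith

lemma step_code {η L Λ : ℝ} (hη : 0 < η) (hη1 : η ≤ 1) (hV : UConv V η) (hL : 0 < L)
    (h2 : ∀ v, ∑ i, (u i v) ^ 2 ≤ ‖v‖ ^ 2) (h3 : ∀ i v, |u i v| ≤ L * ‖v‖)
    (hΛ : 1 ≤ Λ) (k : ℕ) (A : Set V) (hA : ∀ f ∈ A, ‖f‖ ≤ 1) {D : ℝ} (hD : 0 ≤ D)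
    (hdiam : ∀ f ∈ A, ∀ g ∈ A, Dl u f g ≤ D) :
    ∃ c : V → Fin (⌊2 * Λ * 2 ^ k⌋₊ + 1) × (Fin ⌊Real.exp (4 ^ k * Λ)⌋₊ ×
        Fin ((2 * n + 1) ^ (4 ^ k))),
    ∃ D' : Fin (⌊2 * Λ * 2 ^ k⌋₊ + 1) × (Fin ⌊Real.exp (4 ^ k * Λ)⌋₊ ×
        Fin ((2 * n + 1) ^ (4 ^ k))) → ℝ,
      (∀ q, 0 ≤ D' q) ∧ (∀ f ∈ A, ∀ g ∈ A, c f = c g → Dl u f g ≤ D' (c f)) ∧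
      ∀ f ∈ A, D' (c f) ≤ D / 8 + 17 / 8 * ks u (η * Real.sqrt η / (128 * L) * 2 ^ k) f +
        53 * L / (Λ * 2 ^ k * Real.sqrt η) := by
  set q := Real.sqrt η with hq
  have hqpos : 0 < q := Real.sqrt_pos.2 hη
  have hq2 : q ^ 2 = η := Real.sq_sqrt hη.le
  have hq1 : q ≤ 1 := by nlinarith
  have hΛ0 : 0 < Λ := by linarith
  set t := η * q / (128 * L) * 2 ^ k with ht
  have htpos : 0 < t := by positivity
  set h := L / (Λ * 2 ^ k) with hh
  have hhpos : 0 < h := by positivity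
  set J := ⌊2 * Λ * 2 ^ k⌋₊ + 1 with hJ
  let s : ℕ → ℝ := fun j => (j + 1) * h
  have hspos : ∀ j, 0 < s j := fun j => by simp only [s]; positivity
  set a := 10 * L / (2 ^ k * q * Real.sqrt Λ) with haa
  have hsΛ : 0 < Real.sqrt Λ := Real.sqrt_pos.2 hΛ0
  have ha : 0 < a := by positivity
  have ha2 : a ^ 2 = 100 * L ^ 2 / (4 ^ k * η * Λ) := by
    rw [haa, div_pow, mul_pow, mul_pow, mul_pow, hq2, Real.sq_sqrt hΛ0.le]
    rw [← pow_mul, mul_comm k 2, pow_mul]; norm_num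
  set r := L / (2 ^ k * q) with hrr
  have hr : 0 < r := by positivity
  have hr2 : r ^ 2 = L ^ 2 / (4 ^ k * η) := by
    rw [hrr, div_pow, mul_pow, hq2]
    rw [← pow_mul, mul_comm k 2, pow_mul]; norm_num
  let x : ℕ → ℝ := fun j => Real.sqrt (t * (D + s j) / η)
  have hx2 : ∀ j, x j ^ 2 = t * (D + s j) / η := fun j =>
    Real.sq_sqrt (by have := hspos j; positivity)
  have hxpos : ∀ j, 0 < x j := fun j => Real.sqrt_pos.2 (by have := hspos j; positivity)
  let e : ℕ → ℝ := fun j => (D + s j) / 8 + 50 * L / (Λ * 2 ^ k * q)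
  have hebd : ∀ j, 4 * a * x j + 8 * r * x j ^ 2 ≤ e j := by
    intro j
    have h8 : 8 * r * x j ^ 2 = (D + s j) / 16 := by
      rw [hx2, ht, hrr]
      field_simp
      ring
    have h9 : a ^ 2 / (2 * r) = 50 * L / (Λ * 2 ^ k * q) := by
      rw [ha2, hrr, ← hq2, show (4 : ℝ) ^ k = 2 ^ k * 2 ^ k by rw [← mul_pow]; norm_num]
      field_simp
      norm_num
    have h10 : 4 * a * x j ≤ 8 * r * x j ^ 2 + a ^ 2 / (2 * r) := by
      have : 8 * r * x j ^ 2 + a ^ 2 / (2 * r) - 4 * a * x j = (4 * r * x j - a) ^ 2 / (2 * r) := by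
        field_simp; ring
      have h11 : 0 ≤ (4 * r * x j - a) ^ 2 / (2 * r) := by positivity
      linarith
    simp only [e]
    linarith
  have hlay : ∀ j : ℕ, ∃ c : V → Fin ⌊Real.exp (4 ^ k * Λ)⌋₊ × Fin ((2 * n + 1) ^ (4 ^ k)),
      ∀ f, (f ∈ A ∧ ⌊ks u t f / h⌋₊ = j) → ∀ g, (g ∈ A ∧ ⌊ks u t g / h⌋₊ = j) → c f = c g →
      Dl u (kz u t f) (kz u t g) ≤ e j := by
    intro j
    obtain ⟨c, hc⟩ := layer_code u hη hη1 hV hL h2 h3 {f | f ∈ A ∧ ⌊ks u t f / h⌋₊ = j}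
      (D := D) (s := s j) (t := t) (a := a) (r := r) (x := x j) htpos.le ha hr (hxpos j)
      (by rw [hx2]; apply le_of_eq; field_simp) (fun f hf g hg => hdiam f hf.1 g hg.1)
      (by
        intro f hf
        have h5 := Nat.lt_floor_add_one (ks u t f / h)
        rw [hf.2, div_lt_iff₀ hhpos] at h5
        exact h5.le) ⌊Real.exp (4 ^ k * Λ)⌋₊ (by
          congr 2
          rw [ha2]
          field_simp) (4 ^ k) (by
          rw [hr2]
          push_cast
          have : (4 : ℝ) ^ k * (η * (L ^ 2 / (4 ^ k * η)) / L ^ 2) = 1 := by field_simp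
          rw [this]; norm_num)
    exact ⟨c, fun f hf g hg hfg => (hc f hf g hg hfg).trans (hebd j)⟩
  choose cl hcl using hlay
  have hjlt : ∀ f ∈ A, ⌊ks u t f / h⌋₊ < J := by
    intro f hf
    rw [hJ]
    apply Nat.lt_succ_of_le
    apply Nat.floor_le_floor
    rw [div_le_iff₀ hhpos]
    have h5 : ks u t f ≤ 2 * L := Dl_diam u hL h2 h3 f _ (hA f hf) (kz_norm u t f)
    have : 2 * Λ * 2 ^ k * h = 2 * L := by rw [hh]; field_simp
    linarith
  have hval : ∀ f ∈ A, ((Fin.ofNat J ⌊ks u t f / h⌋₊ : Fin J) : ℕ) = ⌊ks u t f / h⌋₊ :=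
    fun f hf => by simp only [Fin.ofNat]; exact Nat.mod_eq_of_lt (hjlt f hf)
  refine ⟨fun f => (Fin.ofNat J ⌊ks u t f / h⌋₊, cl ⌊ks u t f / h⌋₊ f),
    fun q => 2 * s q.1 + e q.1, ?_, ?_, ?_⟩
  · intro q
    have := hspos q.1
    simp only [e]
    positivity
  · intro f hf g hg hfg
    obtain ⟨e1, e2⟩ := Prod.mk.inj hfg
    have e3 : ⌊ks u t f / h⌋₊ = ⌊ks u t g / h⌋₊ := by
      rw [← hval f hf, ← hval g hg, e1]
    rw [← e3] at e2
    have h5 := hcl _ f ⟨hf, rfl⟩ g ⟨hg, e3.symm⟩ e2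
    simp only [hval f hf]
    have h6 := Nat.lt_floor_add_one (ks u t f / h)
    have h7 := Nat.lt_floor_add_one (ks u t g / h)
    rw [div_lt_iff₀ hhpos] at h6 h7
    rw [← e3] at h7
    have h8 : ks u t f ≤ s ⌊ks u t f / h⌋₊ := h6.le
    have h9 : ks u t g ≤ s ⌊ks u t f / h⌋₊ := h7.le
    have h10 := Dl_tri u f (kz u t f) g
    have h11 := Dl_tri u (kz u t f) (kz u t g) g
    have h12 : Dl u (kz u t g) g = ks u t g := Dl_comm u _ _
    have h13 : Dl u f (kz u t f) = ks u t f := rfl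
    linarith
  · intro f hf
    simp only [hval f hf, e, s]
    have h6 : ⌊ks u t f / h⌋₊ ≤ ks u t f / h :=
      Nat.floor_le (div_nonneg (ks_nonneg u t f) hhpos.le)
    rw [le_div_iff₀ hhpos] at h6
    have h7 : h ≤ L / (Λ * 2 ^ k * q) := by
      rw [hh]
      apply div_le_div_of_nonneg_left hL.le (by positivity)
      have : 0 < Λ * 2 ^ k := by positivity
      nlinarith
    have h8 : 53 * L / (Λ * 2 ^ k * q) = 53 * (L / (Λ * 2 ^ k * q)) := by ring
    have h9 : 50 * L / (Λ * 2 ^ k * q) = 50 * (L / (Λ * 2 ^ k * q)) := by ring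
    rw [h8, h9]
    nlinarith

end Step


lemma rad_mgf {n : ℕ} (d : Fin n → ℝ) (θ : ℝ) :
    ∑ ε : Fin n → Bool, Real.exp (θ * ∑ i, sg (ε i) * d i) ≤
      2 ^ n * Real.exp (θ ^ 2 * (∑ i, d i ^ 2) / 2) := by
  have := (Finset.prod_univ_sum (fun _ : Fin n => (Finset.univ : Finset Bool))
    (fun j s => Real.exp (θ * (sg s * d j))))
  simp only [Fintype.piFinset_univ] at this
  have e : ∀ ε : Fin n → Bool, Real.exp (θ * ∑ i, sg (ε i) * d i) =
      ∏ i, Real.exp (θ * (sg (ε i) * d i)) := by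
    intro ε
    rw [← Real.exp_sum, Finset.mul_sum]
  simp only [e]
  rw [← this]
  calc ∏ i, ∑ s : Bool, Real.exp (θ * (sg s * d i)) ≤
      ∏ i, (2 * Real.exp (θ ^ 2 * d i ^ 2 / 2)) := by
        refine Finset.prod_le_prod (fun i _ => by positivity) (fun i _ => ?_)
        simp only [Fintype.sum_bool, sg, if_true, Bool.false_eq_true, if_false]
        have h1 := Real.cosh_le_exp_half_sq (θ * d i)
        rw [Real.cosh_eq, mul_pow] at h1
        rw [show θ * (1 * d i) = θ * d i by ring, show θ * (-1 * d i) = -(θ * d i) by ring]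
        linarith
    _ = _ := by
        rw [Finset.prod_mul_distrib, Finset.prod_const, Finset.card_univ, Fintype.card_fin,
          ← Real.exp_sum]
        congr 2
        rw [Finset.mul_sum, Finset.sum_div]

lemma rad_tail {n : ℕ} (d : Fin n → ℝ) {σ l : ℝ} (hσ : 0 ≤ σ) (hl : 0 ≤ l)
    (hd : ∑ i, d i ^ 2 ≤ σ ^ 2) :
    ((Finset.univ.filter (fun ε : Fin n → Bool => l * σ < |∑ i, sg (ε i) * d i|)).card : ℝ) ≤
      2 ^ n * (2 * Real.exp (-(l ^ 2 / 2))) := by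
  rcases hσ.eq_or_lt with h0 | hσ
  · have hd0 : ∀ i, d i = 0 := by
      intro i
      have h1 : d i ^ 2 ≤ σ ^ 2 := (Finset.single_le_sum (f := fun i => d i ^ 2)
        (fun i _ => sq_nonneg _) (Finset.mem_univ i)).trans hd
      rw [← h0] at h1
      nlinarith
    simp only [hd0, ← h0, mul_zero, Finset.sum_const_zero, abs_zero, lt_self_iff_false,
      Finset.filter_false, Finset.card_empty, Nat.cast_zero]
    positivity
  set B := Finset.univ.filter (fun ε : Fin n → Bool => l * σ < |∑ i, sg (ε i) * d i|) with hB
  obtain ⟨θ, hθ⟩ : ∃ θ, θ = l / σ := ⟨_, rfl⟩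
  have hm1 := rad_mgf d θ
  have hm2 := rad_mgf d (-θ)
  have hsum : ∑ ε ∈ B, (Real.exp (θ * ∑ i, sg (ε i) * d i) +
          Real.exp (-θ * ∑ i, sg (ε i) * d i)) ≤ ∑ ε : Fin n → Bool, (Real.exp (θ * ∑ i, sg (ε i) * d i) +
          Real.exp (-θ * ∑ i, sg (ε i) * d i)) := by
    apply Finset.sum_le_sum_of_subset_of_nonneg (Finset.subset_univ _)
    intro ε _ _
    exact add_nonneg (Real.exp_pos _).le (Real.exp_pos _).le
  rw [Finset.sum_add_distrib (s := Finset.univ)] at hsum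
  have h1 : ∀ ε ∈ B, Real.exp (l ^ 2) ≤ Real.exp (θ * ∑ i, sg (ε i) * d i) +
      Real.exp (-θ * ∑ i, sg (ε i) * d i) := by
    intro ε hε
    have h2 := (Finset.mem_filter.1 hε).2
    have h3 : θ * (l * σ) = l ^ 2 := by rw [hθ]; field_simp
    have hθ0 : 0 ≤ θ := by rw [hθ]; positivity
    rcases lt_abs.1 h2 with h | h
    · have : Real.exp (l ^ 2) ≤ Real.exp (θ * ∑ i, sg (ε i) * d i) := by
        apply Real.exp_le_exp.2
        rw [← h3]
        exact mul_le_mul_of_nonneg_left h.le hθ0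
      linarith [Real.exp_pos (-θ * ∑ i, sg (ε i) * d i)]
    · have : Real.exp (l ^ 2) ≤ Real.exp (-θ * ∑ i, sg (ε i) * d i) := by
        apply Real.exp_le_exp.2
        rw [← h3, neg_mul, ← mul_neg]
        exact mul_le_mul_of_nonneg_left h.le hθ0
      linarith [Real.exp_pos (θ * ∑ i, sg (ε i) * d i)]
  have h4 : B.card * Real.exp (l ^ 2) ≤ 2 ^ n * (2 * Real.exp (l ^ 2 / 2)) := by
    calc B.card * Real.exp (l ^ 2) ≤ ∑ ε ∈ B, (Real.exp (θ * ∑ i, sg (ε i) * d i) +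
          Real.exp (-θ * ∑ i, sg (ε i) * d i)) := by
          rw [← nsmul_eq_mul]; exact Finset.card_nsmul_le_sum _ _ _ h1
      _ ≤ 2 ^ n * Real.exp (θ ^ 2 * (∑ i, d i ^ 2) / 2) +
          2 ^ n * Real.exp ((-θ) ^ 2 * (∑ i, d i ^ 2) / 2) := by
          linarith
      _ ≤ 2 ^ n * (2 * Real.exp (l ^ 2 / 2)) := by
          rw [neg_sq]
          have : θ ^ 2 * (∑ i, d i ^ 2) / 2 ≤ l ^ 2 / 2 := by
            have h5 : θ ^ 2 * σ ^ 2 = l ^ 2 := by rw [hθ]; field_simp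
            nlinarith [sq_nonneg θ]
          have h6 := Real.exp_le_exp.2 this
          have h7 : (0 : ℝ) < 2 ^ n := by positivity
          nlinarith
  have h5 : Real.exp (l ^ 2) = Real.exp (l ^ 2 / 2) * Real.exp (l ^ 2 / 2) := by
    rw [← Real.exp_add]; congr 1; ring
  rw [h5] at h4
  have h6 := Real.exp_pos (l ^ 2 / 2)
  rw [Real.exp_neg]
  have h7 : B.card * Real.exp (l ^ 2 / 2) ≤ 2 ^ n * 2 := by
    nlinarith
  rw [← mul_assoc, ← div_eq_mul_inv, le_div_iff₀ h6]
  exact h7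

/-- A finite partition of the unit ball with diameter bounds. -/
structure BPart {V : Type*} [NormedAddCommGroup V] [NormedSpace ℝ V] {n : ℕ}
    (u : Fin n → V →L[ℝ] ℝ) where
  /-- labels -/
  κ : Type
  /-- finiteness -/
  fin : Fintype κ
  /-- label map -/
  c : V → κ
  /-- diameter bound -/
  D : κ → ℝ
  D0 : ∀ q, 0 ≤ D q
  diam : ∀ f g, ‖f‖ ≤ 1 → ‖g‖ ≤ 1 → c f = c g → Dl u f g ≤ D (c f)

section Chain
variable {V : Type*} [NormedAddCommGroup V] [NormedSpace ℝ V] [FiniteDimensional ℝ V]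
variable {n : ℕ} (u : Fin n → V →L[ℝ] ℝ)

lemma part_step {η L Λ : ℝ} (hη : 0 < η) (hη1 : η ≤ 1) (hV : UConv V η) (hL : 0 < L)
    (h2 : ∀ v, ∑ i, (u i v) ^ 2 ≤ ‖v‖ ^ 2) (h3 : ∀ i v, |u i v| ≤ L * ‖v‖)
    (hΛ : 1 ≤ Λ) (hn : (2 * n + 1 : ℝ) ≤ Real.exp (2 * Λ)) (k : ℕ) (P : BPart u) :
    ∃ P' : BPart u, ((@Fintype.card P'.κ P'.fin : ℕ) : ℝ) ≤
        (@Fintype.card P.κ P.fin : ℕ) * Real.exp (5 * (4 ^ k * Λ)) ∧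
      ∀ f, ‖f‖ ≤ 1 → P'.D (P'.c f) ≤ P.D (P.c f) / 8 +
        17 / 8 * ks u (η * Real.sqrt η / (128 * L) * 2 ^ k) f +
        53 * L / (Λ * 2 ^ k * Real.sqrt η) := by
  have hstep := fun q : P.κ => step_code u hη hη1 hV hL h2 h3 hΛ k {f | ‖f‖ ≤ 1 ∧ P.c f = q}
    (fun f hf => hf.1) (P.D0 q) (fun f hf g hg => by
      have := P.diam f g hf.1 hg.1 (hf.2.trans hg.2.symm)
      rwa [hf.2] at this)
  choose c' D' hD0 hdiam hbd using hstep
  letI := P.fin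
  refine ⟨⟨P.κ × (Fin (⌊2 * Λ * 2 ^ k⌋₊ + 1) × (Fin ⌊Real.exp (4 ^ k * Λ)⌋₊ ×
        Fin ((2 * n + 1) ^ (4 ^ k)))), inferInstance, fun f => (P.c f, c' (P.c f) f),
        fun q => D' q.1 q.2, fun q => hD0 _ _, ?_⟩, ?_, ?_⟩
  · intro f g hf hg hfg
    obtain ⟨e1, e2⟩ := Prod.mk.inj hfg
    rw [← e1] at e2
    exact hdiam (P.c f) f ⟨hf, rfl⟩ g ⟨hg, e1.symm⟩ e2
  · simp only [Fintype.card_prod, Fintype.card_fin]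
    push_cast
    have hE : (0 : ℝ) ≤ 4 ^ k * Λ := by positivity
    have h24 : (2 : ℝ) ^ k ≤ 4 ^ k := by gcongr; norm_num
    have h5 : (⌊2 * Λ * 2 ^ k⌋₊ : ℝ) + 1 ≤ Real.exp (2 * (4 ^ k * Λ)) := by
      have h6 : (⌊2 * Λ * 2 ^ k⌋₊ : ℝ) ≤ 2 * Λ * 2 ^ k := Nat.floor_le (by positivity)
      have h7 := Real.add_one_le_exp (2 * (4 ^ k * Λ))
      nlinarith
    have h6 : (⌊Real.exp (4 ^ k * Λ)⌋₊ : ℝ) ≤ Real.exp (4 ^ k * Λ) :=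
      Nat.floor_le (Real.exp_pos _).le
    have h7 : (2 * (n : ℝ) + 1) ^ (4 ^ k) ≤ Real.exp (2 * (4 ^ k * Λ)) := by
      calc (2 * (n : ℝ) + 1) ^ (4 ^ k) ≤ (Real.exp (2 * Λ)) ^ (4 ^ k) := by gcongr
        _ = _ := by
          rw [← Real.exp_nat_mul]; congr 1; push_cast; ring
    have h8 : Real.exp (5 * (4 ^ k * Λ)) = Real.exp (2 * (4 ^ k * Λ)) *
        (Real.exp (4 ^ k * Λ) * Real.exp (2 * (4 ^ k * Λ))) := by
      rw [← Real.exp_add, ← Real.exp_add]; congr 1; ring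
    rw [h8]
    gcongr
  · intro f hf
    exact hbd (P.c f) f ⟨hf, rfl⟩

lemma chain_exists {η L Λ : ℝ} (hη : 0 < η) (hη1 : η ≤ 1) (hV : UConv V η) (hL : 0 < L)
    (h2 : ∀ v, ∑ i, (u i v) ^ 2 ≤ ‖v‖ ^ 2) (h3 : ∀ i v, |u i v| ≤ L * ‖v‖)
    (hΛ : 1 ≤ Λ) (hn : (2 * n + 1 : ℝ) ≤ Real.exp (2 * Λ)) :
    ∃ P : ℕ → BPart u, (∀ f, (P 0).c f = (P 0).c 0) ∧ (∀ f, (P 0).D ((P 0).c f) ≤ 2 * L) ∧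
      (∀ k, ((@Fintype.card (P k).κ (P k).fin : ℕ) : ℝ) ≤ Real.exp (5 / 3 * (4 ^ k * Λ))) ∧
      ∀ k f, ‖f‖ ≤ 1 → (P (k + 1)).D ((P (k + 1)).c f) ≤ (P k).D ((P k).c f) / 8 +
        17 / 8 * ks u (η * Real.sqrt η / (128 * L) * 2 ^ k) f +
        53 * L / (Λ * 2 ^ k * Real.sqrt η) := by
  have hs := fun k P => part_step u hη hη1 hV hL h2 h3 hΛ hn k P
  choose nx hnx1 hnx2 using hs
  let P0 : BPart u := ⟨Unit, inferInstance, fun _ => (), fun _ => 2 * L, fun _ => by positivity,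
    fun f g hf hg _ => Dl_diam u hL h2 h3 f g hf hg⟩
  let P : ℕ → BPart u := fun k => Nat.rec P0 (fun k Q => nx k Q) k
  refine ⟨P, fun f => rfl, fun f => le_refl _, fun k => ?_, fun k f hf => hnx2 k (P k) f hf⟩
  induction k with
  | zero =>
    have : ((@Fintype.card (P 0).κ (P 0).fin : ℕ) : ℝ) = 1 := by
      simp [P, P0]
    rw [this]
    exact Real.one_le_exp (by positivity)
  | succ k ih =>
    refine (hnx1 k (P k)).trans ?_
    calc _ ≤ Real.exp (5 / 3 * (4 ^ k * Λ)) * Real.exp (5 * (4 ^ k * Λ)) := by gcongr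
      _ = _ := by rw [← Real.exp_add]; congr 1; ring

open Classical in
/-- Representatives. -/
noncomputable def BPart.rep {u : Fin n → V →L[ℝ] ℝ} (P : BPart u) (q : P.κ) : V :=
  if P.c 0 = q then 0 else if h : ∃ f, ‖f‖ ≤ 1 ∧ P.c f = q then Classical.choose h else 0

lemma BPart.rep_dist {u : Fin n → V →L[ℝ] ℝ} (P : BPart u) (f : V) (hf : ‖f‖ ≤ 1) :
    Dl u f (P.rep (P.c f)) ≤ P.D (P.c f) := by
  unfold BPart.rep
  split_ifs with h1 h2
  · exact P.diam f 0 hf (by simp) h1.symm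
  · exact P.diam f _ hf (Classical.choose_spec h2).1 (Classical.choose_spec h2).2.symm
  · exact absurd ⟨f, hf, rfl⟩ h2

/-- The quadratic sign process. -/
def XX (ε : Fin n → Bool) (f : V) : ℝ := ∑ i, sg (ε i) * (u i f) ^ 2

lemma XX_diff_sq (f g : V) : ∑ i, ((u i f) ^ 2 - (u i g) ^ 2) ^ 2 ≤ Dl u f g ^ 2 := by
  rw [Dl_sq]
  refine Finset.sum_le_sum (fun i _ => ?_)
  exact sq_le_sq.2 (ss_lower _ _)

lemma XX_sub (ε : Fin n → Bool) (f g : V) :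
    XX u ε f - XX u ε g = ∑ i, sg (ε i) * ((u i f) ^ 2 - (u i g) ^ 2) := by
  unfold XX
  rw [← Finset.sum_sub_distrib]
  exact Finset.sum_congr rfl (fun i _ => by ring)

lemma XX_lip (ε : Fin n → Bool) (f g : V) :
    |XX u ε f - XX u ε g| ≤ Real.sqrt n * Dl u f g := by
  have hsg : ∀ b, sg b ^ 2 = 1 := by intro b; unfold sg; split_ifs <;> norm_num
  refine abs_le_of_sq_le_sq ?_ (mul_nonneg (Real.sqrt_nonneg _) (Dl_nonneg u _ _))
  rw [mul_pow, Real.sq_sqrt (Nat.cast_nonneg n), XX_sub]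
  refine (Finset.sum_mul_sq_le_sq_mul_sq _ _ _).trans ?_
  simp only [hsg, Finset.sum_const, Finset.card_univ, Fintype.card_fin, nsmul_eq_mul, mul_one]
  have := XX_diff_sq u f g
  gcongr

lemma U_bound {η L Λ : ℝ} (hη : 0 < η) (hη1 : η ≤ 1) (hL : 0 < L) (hΛ : 1 ≤ Λ)
    (P : ℕ → BPart u) (h0 : ∀ f, (P 0).D ((P 0).c f) ≤ 2 * L)
    (hP : ∀ k f, ‖f‖ ≤ 1 → (P (k + 1)).D ((P (k + 1)).c f) ≤ (P k).D ((P k).c f) / 8 +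
        17 / 8 * ks u (η * Real.sqrt η / (128 * L) * 2 ^ k) f +
        53 * L / (Λ * 2 ^ k * Real.sqrt η)) (K : ℕ) (hK : (K : ℝ) ≤ 2 * Λ) (f : V)
    (hf : ‖f‖ ≤ 1) :
    ∑ k ∈ Finset.range (K + 1), 2 ^ k * (P k).D ((P k).c f) ≤
      1800 * L / (η * Real.sqrt η) := by
  set q := Real.sqrt η with hq
  have hqpos : 0 < q := Real.sqrt_pos.2 hη
  have hq2 : q ^ 2 = η := Real.sq_sqrt hη.le
  have hq1 : q ≤ 1 := by nlinarith
  set τ := η * q / (128 * L) with hτ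
  have hτpos : 0 < τ := by positivity
  have hΛ0 : 0 < Λ := by linarith
  set d : ℕ → ℝ := fun k => (P k).D ((P k).c f) with hd
  have hd0 : ∀ k, 0 ≤ d k := fun k => (P k).D0 _
  set U := ∑ k ∈ Finset.range (K + 1), 2 ^ k * d k with hU
  have hks := ks_sum u hτpos f hf K
  have hks2 : ∑ k ∈ Finset.range K, 2 ^ k * ks u (τ * 2 ^ k) f ≤ 2 / τ := by
    rw [le_div_iff₀ hτpos, Finset.sum_mul]
    refine le_of_eq_of_le (Finset.sum_congr rfl (fun k _ => ?_)) hks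
    ring
  have h1 : U = ∑ k ∈ Finset.range K, 2 ^ (k + 1) * d (k + 1) + d 0 := by
    rw [hU, Finset.sum_range_succ']; simp
  have h2 : ∑ k ∈ Finset.range K, 2 ^ (k + 1) * d (k + 1) ≤
      ∑ k ∈ Finset.range K, (1 / 4 * (2 ^ k * d k) + 17 / 4 * (2 ^ k * ks u (τ * 2 ^ k) f) +
        106 * L / (Λ * q)) := by
    refine Finset.sum_le_sum (fun k _ => ?_)
    have h3 := hP k f hf
    have h4 : 2 ^ (k + 1) * (53 * L / (Λ * 2 ^ k * q)) = 106 * L / (Λ * q) := by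
      rw [pow_succ]; field_simp; norm_num
    rw [← h4]
    calc 2 ^ (k + 1) * d (k + 1) ≤ 2 ^ (k + 1) * (d k / 8 + 17 / 8 * ks u (τ * 2 ^ k) f +
        53 * L / (Λ * 2 ^ k * q)) := by gcongr
      _ = _ := by ring
  rw [Finset.sum_add_distrib, Finset.sum_add_distrib, ← Finset.mul_sum, ← Finset.mul_sum,
    Finset.sum_const, Finset.card_range, nsmul_eq_mul] at h2
  have h3 : ∑ k ∈ Finset.range K, 2 ^ k * d k ≤ U := by
    rw [hU, Finset.sum_range_succ]
    have := hd0 K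
    have : 0 ≤ 2 ^ K * d K := by positivity
    linarith
  have h4 : (K : ℝ) * (106 * L / (Λ * q)) ≤ 212 * (L / (η * q)) := by
    calc (K : ℝ) * (106 * L / (Λ * q)) ≤ 2 * Λ * (106 * L / (Λ * q)) := by gcongr
      _ = 212 * (L / q) := by field_simp; norm_num
      _ ≤ 212 * (L / (η * q)) := by
        gcongr
        nlinarith
  have h5 : 2 / τ = 256 * (L / (η * q)) := by rw [hτ]; field_simp; norm_num
  have h6 : L ≤ L / (η * q) := by
    rw [le_div_iff₀ (by positivity)]
    have : η * q ≤ 1 := by nlinarith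
    nlinarith
  have h7 := h0 f
  have h8 : 1800 * L / (η * q) = 1800 * (L / (η * q)) := by ring
  rw [h8]
  have h9 : d 0 ≤ 2 * L := h7
  linarith

open Classical in
/-- The main abstract deviation bound. -/
theorem quad_dev {η L : ℝ} (hη : 0 < η) (hη1 : η ≤ 1) (hV : UConv V η) (hL : 0 < L)
    (h2 : ∀ v, ∑ i, (u i v) ^ 2 ≤ ‖v‖ ^ 2) (h3 : ∀ i v, |u i v| ≤ L * ‖v‖) (hn : 4 ≤ n) :
    ((Finset.univ.filter (fun ε : Fin n → Bool => ∃ v : V, ‖v‖ ≤ 1 ∧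
      18000 * L / (η * Real.sqrt η) * Real.sqrt (Real.log n) <
        |∑ i, sg (ε i) * (u i v) ^ 2|)).card : ℝ) ≤ 2 ^ n / 8 := by
  have hn4 : (4 : ℝ) ≤ n := by exact_mod_cast hn
  have hnpos : (0 : ℝ) < n := by linarith
  set Λ := Real.log n with hΛdef
  have hexpΛ : Real.exp Λ = n := Real.exp_log hnpos
  have hΛ : 1 ≤ Λ := by
    rw [hΛdef, Real.le_log_iff_exp_le hnpos]
    linarith [Real.exp_one_lt_d9]
  have hn2 : (2 * n + 1 : ℝ) ≤ Real.exp (2 * Λ) := by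
    rw [two_mul Λ, Real.exp_add, hexpΛ]; nlinarith
  have hΛ0 : 0 < Λ := by linarith
  obtain ⟨P, hP0, hPD, hPc, hPs⟩ := chain_exists u hη hη1 hV hL h2 h3 hΛ hn2
  set K := ⌈Λ⌉₊ with hK
  have hKle : (K : ℝ) ≤ 2 * Λ := by
    have := (Nat.ceil_lt_add_one hΛ0.le).le
    linarith
  have hKn : Real.sqrt n ≤ 2 ^ K := by
    rw [Real.sqrt_le_left (by positivity), ← pow_mul, mul_comm, pow_mul]
    calc (n : ℝ) = Real.exp Λ := hexpΛ.symm
      _ ≤ Real.exp K := Real.exp_le_exp.2 (Nat.le_ceil Λ)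
      _ = Real.exp 1 ^ K := by rw [← Real.exp_nat_mul]; simp
      _ ≤ (2 ^ 2) ^ K := by
        gcongr
        linarith [Real.exp_one_lt_d9]
  letI := fun k => (P k).fin
  let E : ℕ → ℝ := fun k => 4 ^ k * Λ
  have hE0 : ∀ k, 0 < E k := fun k => by simp only [E]; positivity
  let bad : (k : ℕ) → (P k).κ × (P (k + 1)).κ → Finset (Fin n → Bool) := fun k q =>
    Finset.univ.filter (fun ε => 6 * Real.sqrt (E k) *
      Dl u ((P k).rep q.1) ((P (k + 1)).rep q.2) <
      |∑ i, sg (ε i) * ((u i ((P k).rep q.1)) ^ 2 - (u i ((P (k + 1)).rep q.2)) ^ 2)|)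
  let Bad : Finset (Fin n → Bool) :=
    (Finset.range K).biUnion (fun k => Finset.univ.biUnion (fun q => bad k q))
  have hbad : ∀ k q, ((bad k q).card : ℝ) ≤ 2 ^ n * (2 * Real.exp (-(18 * E k))) := by
    intro k q
    have h := rad_tail (fun i => (u i ((P k).rep q.1)) ^ 2 - (u i ((P (k + 1)).rep q.2)) ^ 2)
      (l := 6 * Real.sqrt (E k)) (Dl_nonneg u _ _) (by positivity) (XX_diff_sq u _ _)
    have e : (6 * Real.sqrt (E k)) ^ 2 / 2 = 18 * E k := by
      rw [mul_pow, Real.sq_sqrt (hE0 k).le]; ring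
    rw [e] at h
    exact h
  have hBad : (Bad.card : ℝ) ≤ 2 ^ n / 8 := by
    have h4 : (Bad.card : ℝ) ≤ ∑ k ∈ Finset.range K, ∑ q : (P k).κ × (P (k + 1)).κ,
        ((bad k q).card : ℝ) := by
      have h5 : Bad.card ≤ ∑ k ∈ Finset.range K, ∑ q : (P k).κ × (P (k + 1)).κ,
        (bad k q).card :=
        Finset.card_biUnion_le.trans (Finset.sum_le_sum (fun k _ => Finset.card_biUnion_le))
      exact_mod_cast h5
    refine h4.trans ?_
    have h6 : ∀ k ∈ Finset.range K, ∑ q : (P k).κ × (P (k + 1)).κ, ((bad k q).card : ℝ) ≤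
        2 ^ n / 16 * (1 / 2) ^ k := by
      intro k _
      calc ∑ q : (P k).κ × (P (k + 1)).κ, ((bad k q).card : ℝ) ≤
          ∑ q : (P k).κ × (P (k + 1)).κ, 2 ^ n * (2 * Real.exp (-(18 * E k))) :=
            Finset.sum_le_sum (fun q _ => hbad k q)
        _ = (Fintype.card (P k).κ * Fintype.card (P (k + 1)).κ) *
            (2 ^ n * (2 * Real.exp (-(18 * E k)))) := by
            rw [Finset.sum_const, Finset.card_univ, Fintype.card_prod, nsmul_eq_mul]
            push_cast; rfl
        _ ≤ (Real.exp (5 / 3 * E k) * Real.exp (5 / 3 * E (k + 1))) *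
            (2 ^ n * (2 * Real.exp (-(18 * E k)))) := by
            gcongr
            · exact hPc k
            · exact hPc (k + 1)
        _ = 2 ^ n * (2 * Real.exp (25 / 3 * E k - 18 * E k)) := by
            rw [sub_eq_add_neg, Real.exp_add, ← Real.exp_add]
            have : 5 / 3 * E k + 5 / 3 * E (k + 1) = 25 / 3 * E k := by
              simp only [E]; ring
            rw [this]; ring
        _ ≤ 2 ^ n * (2 * Real.exp (-(9 * (k + 1)))) := by
            have h7 : (k + 1 : ℝ) ≤ E k := by
              have h8 : k + 1 ≤ 4 ^ k := Nat.lt_pow_self (by norm_num)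
              have h9 : (k + 1 : ℝ) ≤ 4 ^ k := by exact_mod_cast h8
              simp only [E]
              nlinarith
            gcongr
            have := hE0 k
            linarith
        _ ≤ 2 ^ n / 16 * (1 / 2) ^ k := by
            have h8 : Real.exp (-9) ≤ 1 / 64 := by
              rw [Real.exp_neg, inv_eq_one_div]
              gcongr
              have h9 : Real.exp 9 = Real.exp 1 ^ 9 := by rw [← Real.exp_nat_mul]; norm_num
              rw [h9]
              calc (64 : ℝ) ≤ 2 ^ 9 := by norm_num
                _ ≤ _ := by gcongr; linarith [Real.exp_one_gt_d9]
            have h10 : Real.exp (-(9 * (k + 1))) = Real.exp (-9) ^ (k + 1) := by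
              rw [← Real.exp_nat_mul]; congr 1; push_cast; ring
            rw [h10]
            have h11 : Real.exp (-9) ^ (k + 1) ≤ (1 / 64) * (1 / 2) ^ k := by
              rw [pow_succ, mul_comm]
              have := (Real.exp_pos (-9)).le
              gcongr
              linarith
            have h12 : (0 : ℝ) < 2 ^ n := by positivity
            have h13 : (0 : ℝ) < (1 / 2) ^ k := by positivity
            nlinarith [mul_pos h12 h13]
    refine (Finset.sum_le_sum h6).trans ?_
    rw [← Finset.mul_sum]
    have h7 := sum_geometric_two_le K
    have h12 : (0 : ℝ) < 2 ^ n := by positivity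
    nlinarith
  refine le_trans ?_ hBad
  norm_cast
  refine Finset.card_le_card (fun ε hε => ?_)
  by_contra hnot
  obtain ⟨v, hv, hlt⟩ := (Finset.mem_filter.1 hε).2
  have hgood : ∀ k < K, |XX u ε ((P k).rep ((P k).c v)) -
      XX u ε ((P (k + 1)).rep ((P (k + 1)).c v))| ≤
      6 * Real.sqrt (E k) * Dl u ((P k).rep ((P k).c v)) ((P (k + 1)).rep ((P (k + 1)).c v)) := by
    intro k hk
    by_contra hcon
    push Not at hcon
    apply hnot
    rw [XX_sub] at hcon
    exact Finset.mem_biUnion.2 ⟨k, Finset.mem_range.2 hk, Finset.mem_biUnion.2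
      ⟨((P k).c v, (P (k + 1)).c v), Finset.mem_univ _,
        Finset.mem_filter.2 ⟨Finset.mem_univ _, hcon⟩⟩⟩
  set d : ℕ → ℝ := fun k => (P k).D ((P k).c v) with hd
  have hd0 : ∀ k, 0 ≤ d k := fun k => (P k).D0 _
  have hU := U_bound u hη hη1 hL hΛ P hPD hPs K hKle v hv
  set U := ∑ k ∈ Finset.range (K + 1), 2 ^ k * d k with hUdef
  set Y : ℕ → ℝ := fun k => XX u ε ((P k).rep ((P k).c v)) with hY
  have hY0 : Y 0 = 0 := by
    simp only [hY]
    have : (P 0).rep ((P 0).c v) = 0 := by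
      unfold BPart.rep
      rw [if_pos (hP0 v).symm]
    rw [this]
    simp [XX]
  have hsE : ∀ k, Real.sqrt (E k) = 2 ^ k * Real.sqrt Λ := by
    intro k
    simp only [E]
    rw [Real.sqrt_mul (by positivity), show (4 : ℝ) ^ k = (2 ^ k) ^ 2 by
      rw [← pow_mul, mul_comm, pow_mul]; norm_num, Real.sqrt_sq (by positivity)]
  set w := Real.sqrt Λ with hw
  have hw1 : 1 ≤ w := Real.one_le_sqrt.2 hΛ
  have hYd : ∀ k < K, |Y k - Y (k + 1)| ≤ 6 * w * (2 ^ k * d k) +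
      3 * w * (2 ^ (k + 1) * d (k + 1)) := by
    intro k hk
    refine (hgood k hk).trans ?_
    have h5 := Dl_tri u ((P k).rep ((P k).c v)) v ((P (k + 1)).rep ((P (k + 1)).c v))
    have h6 := (P k).rep_dist v hv
    have h7 := (P (k + 1)).rep_dist v hv
    rw [Dl_comm] at h6
    rw [hsE]
    calc _ ≤ 6 * (2 ^ k * w) * (d k + d (k + 1)) := by
          gcongr
          exact h5.trans (add_le_add h6 h7)
      _ = _ := by ring
  have hYK : |Y K| ≤ 6 * w * (U - 2 ^ K * d K) + 3 * w * (U - d 0) := by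
    have h5 : Y K = -∑ k ∈ Finset.range K, (Y k - Y (k + 1)) := by
      rw [Finset.sum_range_sub']; rw [hY0]; ring
    rw [h5, abs_neg]
    refine (Finset.abs_sum_le_sum_abs _ _).trans ?_
    refine (Finset.sum_le_sum (fun k hk => hYd k (Finset.mem_range.1 hk))).trans ?_
    rw [Finset.sum_add_distrib, ← Finset.mul_sum, ← Finset.mul_sum]
    have h6 : ∑ k ∈ Finset.range K, 2 ^ k * d k = U - 2 ^ K * d K := by
      rw [hUdef, Finset.sum_range_succ]; ring
    have h7 : ∑ k ∈ Finset.range K, 2 ^ (k + 1) * d (k + 1) = U - d 0 := by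
      rw [hUdef, Finset.sum_range_succ']; simp
    rw [h6, h7]
  have hlast : |XX u ε v - Y K| ≤ 2 ^ K * d K := by
    refine (XX_lip u ε _ _).trans ?_
    have := (P K).rep_dist v hv
    have h0 := Dl_nonneg u v ((P K).rep ((P K).c v))
    calc _ ≤ 2 ^ K * Dl u v ((P K).rep ((P K).c v)) := by gcongr
      _ ≤ _ := by gcongr
  have hUK : 0 ≤ 2 ^ K * d K := by have := hd0 K; positivity
  have hUKle : 2 ^ K * d K ≤ U := by
    rw [hUdef]
    exact Finset.single_le_sum (f := fun k => 2 ^ k * d k)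
      (fun k _ => by have := hd0 k; positivity) (Finset.mem_range.2 (Nat.lt_succ_self K))
  have hfin : |XX u ε v| ≤ 10 * w * U := by
    have h5 : |XX u ε v| ≤ |XX u ε v - Y K| + |Y K| := by
      have := abs_add_le (XX u ε v - Y K) (Y K)
      simpa using this
    have h6 : 0 ≤ d 0 := hd0 0
    nlinarith
  have h9 : 10 * w * U ≤ 10 * w * (1800 * L / (η * Real.sqrt η)) := by gcongr
  have h10 : 18000 * L / (η * Real.sqrt η) * w = 10 * w * (1800 * L / (η * Real.sqrt η)) := by
    ring
  rw [h10] at hlt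
  have h11 : |XX u ε v| = |∑ i, sg (ε i) * (u i v) ^ 2| := rfl
  rw [h11] at hfin
  linarith

end Chain


lemma tp_aux1 {r t : ℝ} (hr0 : 0 < r) (hr1 : r < 1) (ht0 : 0 ≤ t) (ht1 : t ≤ 1) :
    2 * r * t ≤ (1 + t) ^ r - (1 - t) ^ r := by
  have key : MonotoneOn (fun t : ℝ => (1 + t) ^ r - (1 - t) ^ r - 2 * r * t) (Set.Icc 0 1) := by
    have hd : ∀ x ∈ Set.Ioo (0 : ℝ) 1, HasDerivAt
        (fun t : ℝ => (1 + t) ^ r - (1 - t) ^ r - 2 * r * t)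
        (1 * r * (1 + x) ^ (r - 1) - (-1) * r * (1 - x) ^ (r - 1) - 2 * r * 1) x := by
      intro x hx
      have h1 := ((hasDerivAt_id x).const_add 1).rpow_const (p := r)
        (Or.inl (by simp only [id]; linarith [hx.1]))
      have h2 := ((hasDerivAt_id x).const_sub 1).rpow_const (p := r)
        (Or.inl (by simp only [id]; linarith [hx.2]))
      exact (h1.sub h2).sub ((hasDerivAt_id x).const_mul (2 * r))
    apply monotoneOn_of_deriv_nonneg (convex_Icc 0 1)
    · refine ContinuousOn.sub (ContinuousOn.sub ?_ ?_) (by fun_prop)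
      · exact ContinuousOn.rpow_const (by fun_prop) (fun x hx => Or.inr hr0.le)
      · exact ContinuousOn.rpow_const (by fun_prop) (fun x hx => Or.inr hr0.le)
    · rw [interior_Icc]
      exact fun x hx => (hd x hx).differentiableAt.differentiableWithinAt
    · rw [interior_Icc]
      intro x hx
      rw [(hd x hx).deriv]
      have hA : 0 < (1 + x) ^ (r - 1) := Real.rpow_pos_of_pos (by linarith [hx.1]) _
      have hB : 0 < (1 - x) ^ (r - 1) := Real.rpow_pos_of_pos (by linarith [hx.2]) _
      have hAB : 1 ≤ (1 + x) ^ (r - 1) * (1 - x) ^ (r - 1) := by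
        rw [← Real.mul_rpow (by linarith [hx.1]) (by linarith [hx.2])]
        apply Real.one_le_rpow_of_pos_of_le_one_of_nonpos
        · nlinarith [hx.1, hx.2]
        · nlinarith [hx.1, hx.2]
        · linarith
      have h2 : 2 ≤ (1 + x) ^ (r - 1) + (1 - x) ^ (r - 1) := by
        nlinarith [sq_nonneg ((1 + x) ^ (r - 1) - (1 - x) ^ (r - 1))]
      nlinarith
  have := key ⟨le_refl 0, zero_le_one⟩ ⟨ht0, ht1⟩ ht0
  simp at this
  linarith

lemma tp_aux2 {p t : ℝ} (hp0 : 1 < p) (hp1 : p < 2) (ht0 : 0 ≤ t) (ht1 : t ≤ 1) :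
    2 + p * (p - 1) * t ^ 2 ≤ (1 + t) ^ p + (1 - t) ^ p := by
  have key : MonotoneOn (fun t : ℝ => (1 + t) ^ p + (1 - t) ^ p - p * (p - 1) * t ^ 2)
      (Set.Icc 0 1) := by
    have hd : ∀ x ∈ Set.Ioo (0 : ℝ) 1, HasDerivAt
        (fun t : ℝ => (1 + t) ^ p + (1 - t) ^ p - p * (p - 1) * t ^ 2)
        (1 * p * (1 + x) ^ (p - 1) + (-1) * p * (1 - x) ^ (p - 1) -
          p * (p - 1) * (2 * x)) x := by
      intro x hx
      have h1 := ((hasDerivAt_id x).const_add 1).rpow_const (p := p)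
        (Or.inl (by simp only [id]; linarith [hx.1]))
      have h2 := ((hasDerivAt_id x).const_sub 1).rpow_const (p := p)
        (Or.inl (by simp only [id]; linarith [hx.2]))
      have h3 : HasDerivAt (fun t : ℝ => p * (p - 1) * t ^ 2) (p * (p - 1) * (2 * x)) x := by
        simpa using (hasDerivAt_pow 2 x).const_mul (p * (p - 1))
      exact (h1.add h2).sub h3
    apply monotoneOn_of_deriv_nonneg (convex_Icc 0 1)
    · refine ContinuousOn.sub (ContinuousOn.add ?_ ?_) (by fun_prop)
      · exact ContinuousOn.rpow_const (by fun_prop) (fun x hx => Or.inr (by linarith))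
      · exact ContinuousOn.rpow_const (by fun_prop) (fun x hx => Or.inr (by linarith))
    · rw [interior_Icc]
      exact fun x hx => (hd x hx).differentiableAt.differentiableWithinAt
    · rw [interior_Icc]
      intro x hx
      rw [(hd x hx).deriv]
      have := tp_aux1 (r := p - 1) (t := x) (by linarith) (by linarith) hx.1.le hx.2.le
      nlinarith
  have := key ⟨le_refl 0, zero_le_one⟩ ⟨ht0, ht1⟩ ht0
  simp at this
  linarith

lemma tp_real {p x y : ℝ} (hp0 : 1 < p) (hp1 : p < 2) (hy : 0 ≤ y) (hxy : y ≤ x) :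
    2 * (x ^ 2 + (p - 1) * y ^ 2) ^ (p / 2) ≤ (x + y) ^ p + (x - y) ^ p := by
  rcases (hy.trans hxy).eq_or_lt with h0 | hx
  · have : y = 0 := by linarith
    rw [← h0, this]
    simp [Real.zero_rpow (show p ≠ 0 by linarith), Real.zero_rpow (show p / 2 ≠ 0 by linarith)]
  have hxp : 0 < x ^ p := Real.rpow_pos_of_pos hx _
  set t := y / x with ht
  have ht0 : 0 ≤ t := by positivity
  have ht1 : t ≤ 1 := (div_le_one hx).2 hxy
  have hyt : y = x * t := by rw [ht]; field_simp
  have h1 := tp_aux2 hp0 hp1 ht0 ht1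
  have e1 : (x + y) ^ p = x ^ p * (1 + t) ^ p := by
    rw [← Real.mul_rpow hx.le (by linarith), hyt]; congr 1; ring
  have e2 : (x - y) ^ p = x ^ p * (1 - t) ^ p := by
    rw [← Real.mul_rpow hx.le (by linarith), hyt]; congr 1; ring
  have e3 : (x ^ 2 + (p - 1) * y ^ 2) ^ (p / 2) = x ^ p * (1 + (p - 1) * t ^ 2) ^ (p / 2) := by
    have : x ^ 2 + (p - 1) * y ^ 2 = x ^ 2 * (1 + (p - 1) * t ^ 2) := by rw [hyt]; ring
    rw [this, Real.mul_rpow (by positivity) (by nlinarith [sq_nonneg t])]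
    congr 1
    rw [← Real.rpow_natCast, ← Real.rpow_mul hx.le]
    congr 1; push_cast; ring
  have h2 : (1 + (p - 1) * t ^ 2) ^ (p / 2) ≤ 1 + p / 2 * ((p - 1) * t ^ 2) :=
    rpow_one_add_le_one_add_mul_self (by nlinarith [sq_nonneg t]) (by linarith) (by linarith)
  rw [e1, e2, e3, ← mul_add, ← mul_assoc, mul_comm 2, mul_assoc]
  apply mul_le_mul_of_nonneg_left _ hxp.le
  linarith

lemma concave_pm {q M S s : ℝ} (hq0 : 0 ≤ q) (hq1 : q ≤ 1) (hSM : S ≤ M) (hs : |s| ≤ S) :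
    (M + S) ^ q + (M - S) ^ q ≤ (M + s) ^ q + (M - s) ^ q := by
  have hS : 0 ≤ S := (abs_nonneg s).trans hs
  rcases hS.eq_or_lt with h0 | hS
  · have : s = 0 := by rw [← h0] at hs; exact abs_nonpos_iff.1 hs
    rw [this, ← h0]
  have hc := Real.concaveOn_rpow hq0 hq1
  set t := (S + s) / (2 * S) with ht
  have h1 := abs_le.1 hs
  have ht0 : 0 ≤ t := div_nonneg (by linarith) (by linarith)
  have ht1 : t ≤ 1 := (div_le_one (by linarith)).2 (by linarith)
  have hts : t * (2 * S) = S + s := by rw [ht]; field_simp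
  have m1 : M + S ∈ Set.Ici (0 : ℝ) := by simp only [Set.mem_Ici]; linarith
  have m2 : M - S ∈ Set.Ici (0 : ℝ) := by simp only [Set.mem_Ici]; linarith
  have c1 := hc.2 m1 m2 ht0 (by linarith : (0 : ℝ) ≤ 1 - t) (by ring)
  have c2 := hc.2 m1 m2 (by linarith : (0 : ℝ) ≤ 1 - t) ht0 (by ring)
  simp only [smul_eq_mul] at c1 c2
  rw [show t * (M + S) + (1 - t) * (M - S) = M + s by linarith] at c1
  rw [show (1 - t) * (M + S) + t * (M - S) = M - s by linarith] at c2
  linarith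

lemma sq_rpow_half {x : ℝ} (hx : 0 ≤ x) (p : ℝ) : (x ^ 2) ^ (p / 2) = x ^ p := by
  rw [← Real.rpow_natCast, ← Real.rpow_mul hx]
  congr 1; push_cast; ring

lemma tp_complex {p : ℝ} (hp0 : 1 < p) (hp1 : p < 2) (a b : ℂ) :
    2 * (‖a‖ ^ 2 + (p - 1) * ‖b‖ ^ 2) ^ (p / 2) ≤ ‖a + b‖ ^ p + ‖a - b‖ ^ p := by
  have e1 : ‖a + b‖ ^ 2 = (‖a‖ ^ 2 + ‖b‖ ^ 2) + 2 * inner ℝ a b := by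
    rw [norm_add_sq_real]; ring
  have e2 : ‖a - b‖ ^ 2 = (‖a‖ ^ 2 + ‖b‖ ^ 2) - 2 * inner ℝ a b := by
    rw [norm_sub_sq_real]; ring
  have h1 : (‖a‖ ^ 2 + ‖b‖ ^ 2 + 2 * ‖a‖ * ‖b‖) ^ (p / 2) +
      (‖a‖ ^ 2 + ‖b‖ ^ 2 - 2 * ‖a‖ * ‖b‖) ^ (p / 2) ≤ ‖a + b‖ ^ p + ‖a - b‖ ^ p := by
    rw [← sq_rpow_half (norm_nonneg (a + b)), ← sq_rpow_half (norm_nonneg (a - b)), e1, e2]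
    apply concave_pm (by linarith) (by linarith)
    · nlinarith [sq_nonneg (‖a‖ - ‖b‖)]
    · rw [abs_mul, abs_two, mul_assoc]
      have := abs_real_inner_le_norm a b
      linarith
  refine le_trans ?_ h1
  rw [show ‖a‖ ^ 2 + ‖b‖ ^ 2 + 2 * ‖a‖ * ‖b‖ = (‖a‖ + ‖b‖) ^ 2 by ring]
  rw [sq_rpow_half (by positivity)]
  rcases le_total ‖b‖ ‖a‖ with h | h
  · rw [show ‖a‖ ^ 2 + ‖b‖ ^ 2 - 2 * ‖a‖ * ‖b‖ = (‖a‖ - ‖b‖) ^ 2 by ring,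
      sq_rpow_half (by linarith)]
    exact tp_real hp0 hp1 (norm_nonneg b) h
  · rw [show ‖a‖ ^ 2 + ‖b‖ ^ 2 - 2 * ‖a‖ * ‖b‖ = (‖b‖ - ‖a‖) ^ 2 by ring,
      sq_rpow_half (by linarith)]
    have h2 := tp_real hp0 hp1 (norm_nonneg a) h
    rw [add_comm ‖a‖ ‖b‖]
    refine le_trans ?_ h2
    have : (‖a‖ ^ 2 + (p - 1) * ‖b‖ ^ 2) ^ (p / 2) ≤ (‖b‖ ^ 2 + (p - 1) * ‖a‖ ^ 2) ^ (p / 2) := by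
      apply Real.rpow_le_rpow _ _ (by linarith)
      · have : 0 ≤ p - 1 := by linarith
        positivity
      · nlinarith [mul_self_le_mul_self (norm_nonneg a) h]
    linarith

/-- Weighted concavity. -/
lemma conc_split {q u v t : ℝ} (hq0 : 0 < q) (hq1 : q < 1) (hu : 0 ≤ u) (hv : 0 ≤ v)
    (ht0 : 0 ≤ t) (ht1 : t ≤ 1) :
    t ^ (1 - q) * u ^ q + (1 - t) ^ (1 - q) * v ^ q ≤ (u + v) ^ q := by
  rcases ht0.eq_or_lt with h | ht0
  · rw [← h, Real.zero_rpow (by linarith)]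
    simp only [sub_zero, Real.one_rpow, zero_mul, one_mul, zero_add]
    exact Real.rpow_le_rpow hv (by linarith) hq0.le
  rcases ht1.eq_or_lt with h | ht1
  · rw [h, sub_self, Real.zero_rpow (by linarith)]
    simp only [Real.one_rpow, zero_mul, one_mul, add_zero]
    exact Real.rpow_le_rpow hu (by linarith) hq0.le
  have ht1' : 0 < 1 - t := by linarith
  have hc := Real.concaveOn_rpow hq0.le hq1.le
  have m1 : u / t ∈ Set.Ici (0 : ℝ) := div_nonneg hu ht0.le
  have m2 : v / (1 - t) ∈ Set.Ici (0 : ℝ) := div_nonneg hv ht1'.le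
  have c1 := hc.2 m1 m2 ht0.le ht1'.le (by ring)
  simp only [smul_eq_mul] at c1
  rw [mul_div_cancel₀ _ ht0.ne', mul_div_cancel₀ _ ht1'.ne', Real.div_rpow hu ht0.le,
    Real.div_rpow hv ht1'.le] at c1
  rw [Real.rpow_sub ht0, Real.rpow_sub ht1', Real.rpow_one, Real.rpow_one]
  calc _ = t * (u ^ q / t ^ q) + (1 - t) * (v ^ q / (1 - t) ^ q) := by ring
    _ ≤ _ := c1

lemma uconv_Lp {Ω : Type*} [MeasurableSpace Ω] (P : Measure Ω) [IsProbabilityMeasure P]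
    {p : ℝ} (hp0 : 1 < p) (hp1 : p < 2) [Fact (1 ≤ ENNReal.ofReal p)] :
    UConv (Lp ℂ (ENNReal.ofReal p) P) ((p - 1) / 4) := by
  have hp : 0 < p := by linarith
  have hnorm : ∀ f : Lp ℂ (ENNReal.ofReal p) P,
      ‖f‖ ^ p = ∫ ω, ‖f ω‖ ^ p ∂P := by
    intro f
    rw [Lp.norm_def, (Lp.memLp f).eLpNorm_eq_integral_rpow_norm (by simpa using hp) (by simp),
      ENNReal.toReal_ofReal hp.le, ENNReal.toReal_ofReal (by positivity),
      ← Real.rpow_mul (by positivity), inv_mul_cancel₀ hp.ne', Real.rpow_one]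
  have hpint : ∀ f : Lp ℂ (ENNReal.ofReal p) P, Integrable (fun ω => ‖f ω‖ ^ p) P := by
    intro f
    have := (Lp.memLp f).integrable_norm_rpow (by simpa using hp) (by simp)
    rwa [ENNReal.toReal_ofReal hp.le] at this
  have main : ∀ a b : Lp ℂ (ENNReal.ofReal p) P,
      2 * (‖a‖ ^ 2 + (p - 1) * ‖b‖ ^ 2) ^ (p / 2) ≤ ‖a + b‖ ^ p + ‖a - b‖ ^ p := by
    intro a b
    set s := ‖a‖ ^ 2 + (p - 1) * ‖b‖ ^ 2 with hs
    have hp1' : 0 ≤ p - 1 := by linarith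
    have hs0 : 0 ≤ s := by positivity
    rcases hs0.eq_or_lt with h | hs0
    · rw [← h, Real.zero_rpow (by linarith)]; simp only [mul_zero]; positivity
    obtain ⟨t, ht⟩ : ∃ t, t = ‖a‖ ^ 2 / s := ⟨_, rfl⟩
    have ht0 : 0 ≤ t := by rw [ht]; positivity
    have hts : ‖a‖ ^ 2 = t * s := by rw [ht]; field_simp
    have hts' : (p - 1) * ‖b‖ ^ 2 = (1 - t) * s := by linarith
    have ht1 : t ≤ 1 := by
      rw [ht]; apply (div_le_one hs0).2; rw [hs]; nlinarith [sq_nonneg ‖b‖]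
    have pw : ∀ᵐ ω ∂P, 2 * (t ^ (1 - p / 2) * ‖a ω‖ ^ p +
        (1 - t) ^ (1 - p / 2) * ((p - 1) ^ (p / 2) * ‖b ω‖ ^ p)) ≤
        ‖(a + b) ω‖ ^ p + ‖(a - b) ω‖ ^ p := by
      filter_upwards [Lp.coeFn_add a b, Lp.coeFn_sub a b] with ω h1 h2
      rw [h1, h2]
      refine le_trans ?_ (tp_complex hp0 hp1 (a ω) (b ω))
      have := conc_split (q := p / 2) (u := ‖a ω‖ ^ 2) (v := (p - 1) * ‖b ω‖ ^ 2) (by linarith)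
        (by linarith) (by positivity) (by positivity) ht0 ht1
      rw [Real.mul_rpow hp1' (by positivity), sq_rpow_half (norm_nonneg _),
        sq_rpow_half (norm_nonneg _)] at this
      linarith
    have i1 := integral_mono_ae ?_ ?_ pw
    · rw [integral_const_mul, integral_add, integral_const_mul, integral_const_mul,
        integral_const_mul, integral_add (hpint _) (hpint _), ← hnorm, ← hnorm, ← hnorm, ← hnorm,
        ← sq_rpow_half (norm_nonneg b), ← Real.mul_rpow hp1' (by positivity), hts',
        ← sq_rpow_half (norm_nonneg a), hts, Real.mul_rpow ht0 hs0.le,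
        Real.mul_rpow (by linarith) hs0.le] at i1
      · refine le_trans (le_of_eq ?_) i1
        rw [← mul_assoc, ← mul_assoc, ← add_mul,
          ← Real.rpow_add_of_nonneg ht0 (by linarith) (by linarith),
          ← Real.rpow_add_of_nonneg (by linarith) (by linarith) (by linarith)]
        simp
      · exact (hpint _).const_mul _
      · exact ((hpint _).const_mul _).const_mul _
    · exact (((hpint _).const_mul _).add (((hpint _).const_mul _).const_mul _)).const_mul _
    · exact (hpint _).add (hpint _)
  intro x y
  have h1 := main ((1 / 2 : ℝ) • (x + y)) ((1 / 2 : ℝ) • (x - y))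
  rw [show (1 / 2 : ℝ) • (x + y) + (1 / 2 : ℝ) • (x - y) = x by module,
    show (1 / 2 : ℝ) • (x + y) - (1 / 2 : ℝ) • (x - y) = y by module] at h1
  have hn2 : ‖(1 / 2 : ℝ) • (x - y)‖ = 1 / 2 * ‖x - y‖ := by
    rw [norm_smul]; simp
  rw [hn2] at h1
  have hp1' : 0 ≤ p - 1 := by linarith
  have hc := (Real.concaveOn_rpow (p := p / 2) (by linarith) (by linarith)).2
    (show ‖x‖ ^ 2 ∈ Set.Ici (0 : ℝ) from Set.mem_Ici.2 (sq_nonneg _))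
    (show ‖y‖ ^ 2 ∈ Set.Ici (0 : ℝ) from Set.mem_Ici.2 (sq_nonneg _))
    (show (0 : ℝ) ≤ 1 / 2 by norm_num) (show (0 : ℝ) ≤ 1 / 2 by norm_num) (by norm_num)
  simp only [smul_eq_mul] at hc
  rw [sq_rpow_half (norm_nonneg _), sq_rpow_half (norm_nonneg _)] at hc
  have h3 := (Real.rpow_le_rpow_iff (z := p / 2)
    (x := ‖(1 / 2 : ℝ) • (x + y)‖ ^ 2 + (p - 1) * (1 / 2 * ‖x - y‖) ^ 2)
    (y := 1 / 2 * ‖x‖ ^ 2 + 1 / 2 * ‖y‖ ^ 2) (by positivity) (by positivity) (by linarith)).1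
    (by linarith)
  nlinarith


lemma uconv_euclid (n : ℕ) {η : ℝ} (hη : η ≤ 1 / 4) (x y : EuclideanSpace ℂ (Fin n)) :
    ‖(1 / 2 : ℝ) • (x + y)‖ ^ 2 ≤ (‖x‖ ^ 2 + ‖y‖ ^ 2) / 2 - η * ‖x - y‖ ^ 2 := by
  have h := parallelogram_law_with_norm ℝ x y
  rw [norm_smul, mul_pow]
  simp only [one_div, norm_inv, Real.norm_ofNat]
  nlinarith [sq_nonneg ‖x - y‖]

open Classical in
lemma core_split {E : Type*} [NormedAddCommGroup E] [NormedSpace ℝ E] {n : ℕ} (hn : 4 ≤ n)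
    {η L : ℝ} (hη : 0 < η) (hη4 : η ≤ 1 / 4) (hE : UConv E η) (hL : 0 < L)
    (T : (Fin n → ℂ) →ₗ[ℝ] E) (hT : ∀ a i, ‖a i‖ ≤ L * ‖T a‖) (ρ : ℝ)
    (hρ : ρ = 72000 * L / (η * √η) * √(Real.log n)) :
    ∃ ε : Fin n → Bool, |∑ i, sg (ε i)| ≤ 4 * √n ∧
      ∀ a : Fin n → ℂ, |∑ i, sg (ε i) * ‖a i‖ ^ 2| ≤
        (ρ ^ 2 * ‖T a‖ ^ 2 + ∑ i, ‖a i‖ ^ 2) / 2 := by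
  have hn' : (4 : ℝ) ≤ n := by exact_mod_cast hn
  have hlog : 0 < √(Real.log n) := Real.sqrt_pos.2 (Real.log_pos (by linarith))
  have hsη : 0 < √η := Real.sqrt_pos.2 hη
  have hρ0 : 0 < ρ := by rw [hρ]; positivity
  let S : (Fin n → ℂ) →ₗ[ℝ] WithLp 2 (E × EuclideanSpace ℂ (Fin n)) :=
    { toFun := fun a => WithLp.toLp 2 (T a, (ρ⁻¹ : ℝ) • WithLp.toLp 2 a)
      map_add' := by
        intro a b
        rw [map_add, WithLp.toLp_add, smul_add]
        rfl
      map_smul' := by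
        intro c a
        rw [map_smul, WithLp.toLp_smul, smul_comm]
        rfl }
  have hSn : ∀ a, ‖S a‖ ^ 2 = ‖T a‖ ^ 2 + ρ⁻¹ ^ 2 * ∑ i, ‖a i‖ ^ 2 := by
    intro a
    rw [WithLp.prod_norm_sq_eq_of_L2]
    change ‖T a‖ ^ 2 + ‖(ρ⁻¹ : ℝ) • (WithLp.toLp 2 a : EuclideanSpace ℂ (Fin n))‖ ^ 2 = _
    rw [norm_smul, mul_pow, EuclideanSpace.norm_sq_eq, Real.norm_eq_abs, sq_abs]
  let V := LinearMap.range S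
  have hV : UConv V η := by
    intro x y
    have h1 := hE (x : WithLp 2 (E × EuclideanSpace ℂ (Fin n))).fst
      (y : WithLp 2 (E × EuclideanSpace ℂ (Fin n))).fst
    have h2 := uconv_euclid n hη4 (x : WithLp 2 (E × EuclideanSpace ℂ (Fin n))).snd
      (y : WithLp 2 (E × EuclideanSpace ℂ (Fin n))).snd
    simp only [Submodule.coe_norm, Submodule.coe_smul, Submodule.coe_add, Submodule.coe_sub,
      WithLp.prod_norm_sq_eq_of_L2, WithLp.smul_fst, WithLp.smul_snd, WithLp.add_fst,
      WithLp.add_snd, WithLp.sub_fst, WithLp.sub_snd]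
    linarith
  let pr : Fin n → V →ₗ[ℝ] ℂ := fun i =>
    { toFun := fun v => (v : WithLp 2 (E × EuclideanSpace ℂ (Fin n))).snd i
      map_add' := fun _ _ => rfl
      map_smul' := fun _ _ => rfl }
  let uR : Fin n → V →L[ℝ] ℝ := fun i =>
    LinearMap.toContinuousLinearMap (Complex.reLm.comp (pr i))
  let uI : Fin n → V →L[ℝ] ℝ := fun i =>
    LinearMap.toContinuousLinearMap (Complex.imLm.comp (pr i))
  have hpr : ∀ (i : Fin n) (a : Fin n → ℂ) (h : S a ∈ V), pr i ⟨S a, h⟩ = (ρ⁻¹ : ℝ) • a i :=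
    fun _ _ _ => rfl
  have hsq : ∀ v : V, ∑ i, ‖pr i v‖ ^ 2 ≤ ‖v‖ ^ 2 := by
    rintro ⟨_, a, rfl⟩
    change ∑ i, ‖(ρ⁻¹ : ℝ) • a i‖ ^ 2 ≤ ‖S a‖ ^ 2
    simp only [hSn, norm_smul, mul_pow, ← Finset.mul_sum, Real.norm_eq_abs, sq_abs]
    nlinarith [sq_nonneg ‖T a‖]
  have hsup : ∀ i (v : V), ‖pr i v‖ ≤ L / ρ * ‖v‖ := by
    rintro i ⟨_, a, rfl⟩
    have h1 : ‖T a‖ ≤ ‖S a‖ := by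
      apply le_of_sq_le_sq _ (norm_nonneg _)
      rw [hSn]
      have : 0 ≤ ρ⁻¹ ^ 2 * ∑ i, ‖a i‖ ^ 2 := by positivity
      linarith
    change ‖(ρ⁻¹ : ℝ) • a i‖ ≤ L / ρ * ‖S a‖
    rw [norm_smul, Real.norm_eq_abs, abs_inv, abs_of_pos hρ0]
    calc ρ⁻¹ * ‖a i‖ ≤ ρ⁻¹ * (L * ‖S a‖) := by
          apply mul_le_mul_of_nonneg_left _ (by positivity)
          exact (hT a i).trans (mul_le_mul_of_nonneg_left h1 hL.le)
      _ = _ := by ring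
  have hB : 18000 * (L / ρ) / (η * √η) * √(Real.log n) = 1 / 4 := by
    rw [hρ]; field_simp; norm_num
  have qR := quad_dev (V := V) (u := uR) hη (by linarith) hV (div_pos hL hρ0)
    (fun v => le_trans (Finset.sum_le_sum (fun i _ => by
      change (pr i v).re ^ 2 ≤ ‖pr i v‖ ^ 2
      rw [← sq_abs]
      exact pow_le_pow_left₀ (abs_nonneg _) (Complex.abs_re_le_norm _) 2)) (hsq v))
    (fun i v => (Complex.abs_re_le_norm (pr i v)).trans (hsup i v)) hn
  have qI := quad_dev (V := V) (u := uI) hη (by linarith) hV (div_pos hL hρ0)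
    (fun v => le_trans (Finset.sum_le_sum (fun i _ => by
      change (pr i v).im ^ 2 ≤ ‖pr i v‖ ^ 2
      rw [← sq_abs]
      exact pow_le_pow_left₀ (abs_nonneg _) (Complex.abs_im_le_norm _) 2)) (hsq v))
    (fun i v => (Complex.abs_im_le_norm (pr i v)).trans (hsup i v)) hn
  have qN := rad_tail (n := n) (fun _ => (1 : ℝ)) (σ := √n) (l := 4) (by positivity) (by norm_num)
    (by simp)
  rw [hB] at qR qI
  set BR := Finset.univ.filter (fun ε : Fin n → Bool => ∃ v : V, ‖v‖ ≤ 1 ∧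
    1 / 4 < |∑ i, sg (ε i) * (uR i v) ^ 2|) with hBR
  set BI := Finset.univ.filter (fun ε : Fin n → Bool => ∃ v : V, ‖v‖ ≤ 1 ∧
    1 / 4 < |∑ i, sg (ε i) * (uI i v) ^ 2|) with hBI
  set BN := Finset.univ.filter (fun ε : Fin n → Bool => 4 * √n < |∑ i, sg (ε i) * 1|) with hBN
  have hex : ∃ ε, ε ∉ BR ∪ BI ∪ BN := by
    by_contra! hcon
    have h1 : (Finset.univ : Finset (Fin n → Bool)) ⊆ BR ∪ BI ∪ BN := fun ε _ => hcon ε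
    have h2 := Finset.card_le_card h1
    rw [Finset.card_univ, Fintype.card_fun, Fintype.card_bool, Fintype.card_fin] at h2
    have h3 : (BR ∪ BI ∪ BN).card ≤ BR.card + BI.card + BN.card :=
      (Finset.card_union_le _ _).trans (Nat.add_le_add_right (Finset.card_union_le _ _) _)
    have h4 : ((2 ^ n : ℕ) : ℝ) ≤ BR.card + BI.card + BN.card := by exact_mod_cast h2.trans h3
    push_cast at h4
    have h5 : Real.exp (-(4 ^ 2 / 2)) ≤ 1 / 9 := by
      have h6 := Real.add_one_le_exp (8 : ℝ)
      rw [show (-(4 ^ 2 / 2) : ℝ) = -8 by norm_num, Real.exp_neg, inv_eq_one_div]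
      exact one_div_le_one_div_of_le (by norm_num) (by linarith)
    have h7 : (0 : ℝ) < 2 ^ n := by positivity
    nlinarith
  obtain ⟨ε, hε⟩ := hex
  simp only [Finset.mem_union, not_or] at hε
  obtain ⟨⟨hεR, hεI⟩, hεN⟩ := hε
  simp only [hBR, hBI, hBN, Finset.mem_filter, Finset.mem_univ, true_and, not_exists, not_and,
    not_lt, mul_one] at hεR hεI hεN
  have homog : ∀ u : Fin n → V →L[ℝ] ℝ, (∀ v : V, ‖v‖ ≤ 1 → |∑ i, sg (ε i) * (u i v) ^ 2| ≤ 1 / 4) →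
      ∀ v : V, |∑ i, sg (ε i) * (u i v) ^ 2| ≤ 1 / 4 * ‖v‖ ^ 2 := by
    intro u hu v
    rcases eq_or_ne v 0 with h0 | h0
    · simp [h0]
    have hv : 0 < ‖v‖ := norm_pos_iff.2 h0
    have h1 := hu (‖v‖⁻¹ • v) (by rw [norm_smul, norm_inv, norm_norm, inv_mul_cancel₀ hv.ne'])
    have h2 : ∑ i, sg (ε i) * (u i (‖v‖⁻¹ • v)) ^ 2 = ‖v‖⁻¹ ^ 2 * ∑ i, sg (ε i) * (u i v) ^ 2 := by
      rw [Finset.mul_sum]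
      refine Finset.sum_congr rfl (fun i _ => ?_)
      rw [map_smul, smul_eq_mul]; ring
    rw [h2, abs_mul, abs_of_nonneg (by positivity), inv_pow, inv_mul_le_iff₀ (by positivity)] at h1
    linarith
  refine ⟨ε, hεN, fun a => ?_⟩
  have g1 := homog uR hεR ⟨S a, a, rfl⟩
  have g2 := homog uI hεI ⟨S a, a, rfl⟩
  have e1 : ∑ i, sg (ε i) * ‖a i‖ ^ 2 = ρ ^ 2 * (∑ i, sg (ε i) * (uR i ⟨S a, a, rfl⟩) ^ 2 +
      ∑ i, sg (ε i) * (uI i ⟨S a, a, rfl⟩) ^ 2) := by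
    rw [← Finset.sum_add_distrib, Finset.mul_sum]
    refine Finset.sum_congr rfl (fun i _ => ?_)
    change _ = ρ ^ 2 * (sg (ε i) * ((ρ⁻¹ : ℝ) • a i).re ^ 2 + sg (ε i) * ((ρ⁻¹ : ℝ) • a i).im ^ 2)
    rw [Complex.smul_re, Complex.smul_im, Complex.sq_norm, Complex.normSq_apply]
    simp only [smul_eq_mul]
    field_simp
  rw [e1, abs_mul, abs_of_nonneg (sq_nonneg ρ)]
  simp only [Submodule.coe_norm, hSn] at g1 g2
  have g3 := abs_add_le (∑ i, sg (ε i) * (uR i ⟨S a, a, rfl⟩) ^ 2)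
    (∑ i, sg (ε i) * (uI i ⟨S a, a, rfl⟩) ^ 2)
  calc _ ≤ ρ ^ 2 * ((‖T a‖ ^ 2 + ρ⁻¹ ^ 2 * ∑ i, ‖a i‖ ^ 2) / 2) := by
        apply mul_le_mul_of_nonneg_left _ (sq_nonneg ρ)
        linarith
    _ = _ := by field_simp


section Fin
variable {Ω : Type*} [MeasurableSpace Ω] {P : Measure Ω} [IsProbabilityMeasure P] {n : ℕ}
  {φ : Fin n → Ω → ℂ} {L : ℝ}

lemma phi_memLp (hm : ∀ j, AEStronglyMeasurable (φ j) P) (hb : ∀ j, ∀ᵐ ω ∂P, ‖φ j ω‖ ≤ L)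
    (q : ENNReal) (j : Fin n) : MemLp (φ j) q P :=
  MemLp.of_bound (hm j) L (hb j)

lemma comb_memLp (hm : ∀ j, AEStronglyMeasurable (φ j) P) (hb : ∀ j, ∀ᵐ ω ∂P, ‖φ j ω‖ ≤ L)
    (q : ENNReal) (a : Fin n → ℂ) : MemLp (fun ω => ∑ i, a i * φ i ω) q P :=
  memLp_finsetSum _ (fun i _ => (phi_memLp hm hb q i).const_mul (a i))

lemma prod_int (hm : ∀ j, AEStronglyMeasurable (φ j) P) (hb : ∀ j, ∀ᵐ ω ∂P, ‖φ j ω‖ ≤ L)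
    (i j : Fin n) : Integrable (fun ω => (starRingEnd ℂ) (φ i ω) * φ j ω) P := by
  have h1 : MemLp (fun ω => (starRingEnd ℂ) (φ i ω)) 2 P := (phi_memLp hm hb 2 i).star
  exact h1.integrable_mul (phi_memLp hm hb 2 j)

lemma coef_eq (hm : ∀ j, AEStronglyMeasurable (φ j) P) (hb : ∀ j, ∀ᵐ ω ∂P, ‖φ j ω‖ ≤ L)
    (ho : ∀ i j, (∫ ω, (starRingEnd ℂ) (φ i ω) * φ j ω ∂P) = if i = j then 1 else 0)
    (a : Fin n → ℂ) (i : Fin n) :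
    ∫ ω, (starRingEnd ℂ) (φ i ω) * (∑ j, a j * φ j ω) ∂P = a i := by
  have e : ∀ ω, (starRingEnd ℂ) (φ i ω) * (∑ j, a j * φ j ω) =
      ∑ j, a j * ((starRingEnd ℂ) (φ i ω) * φ j ω) := by
    intro ω
    rw [Finset.mul_sum]
    exact Finset.sum_congr rfl (fun j _ => by ring)
  simp only [e]
  rw [integral_finsetSum _ (fun j _ => (prod_int hm hb i j).const_mul (a j))]
  simp only [integral_const_mul, ho]
  simp

lemma coef_le (hm : ∀ j, AEStronglyMeasurable (φ j) P) (hb : ∀ j, ∀ᵐ ω ∂P, ‖φ j ω‖ ≤ L)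
    (hL : 0 ≤ L)
    (ho : ∀ i j, (∫ ω, (starRingEnd ℂ) (φ i ω) * φ j ω ∂P) = if i = j then 1 else 0)
    (q : ENNReal) (hq : 1 ≤ q) (a : Fin n → ℂ) (i : Fin n) :
    ‖a i‖ ≤ L * (eLpNorm (fun ω => ∑ j, a j * φ j ω) q P).toReal := by
  have hf1 : Integrable (fun ω => ∑ j, a j * φ j ω) P :=
    memLp_one_iff_integrable.1 (comb_memLp hm hb 1 a)
  have h1 : ‖a i‖ ≤ ∫ ω, L * ‖∑ j, a j * φ j ω‖ ∂P := by
    rw [← coef_eq hm hb ho a i]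
    refine norm_integral_le_of_norm_le (hf1.norm.const_mul L) ?_
    filter_upwards [hb i] with ω hω
    rw [norm_mul, RCLike.norm_conj]
    exact mul_le_mul_of_nonneg_right hω (norm_nonneg _)
  rw [integral_const_mul] at h1
  refine h1.trans (mul_le_mul_of_nonneg_left ?_ hL)
  rw [integral_norm_eq_lintegral_enorm hf1.1, ← eLpNorm_one_eq_lintegral_enorm]
  exact ENNReal.toReal_mono (comb_memLp hm hb q a).2.ne (eLpNorm_le_eLpNorm_of_exponent_le hq hf1.1)

lemma l2_eq (hm : ∀ j, AEStronglyMeasurable (φ j) P) (hb : ∀ j, ∀ᵐ ω ∂P, ‖φ j ω‖ ≤ L)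
    (ho : ∀ i j, (∫ ω, (starRingEnd ℂ) (φ i ω) * φ j ω ∂P) = if i = j then 1 else 0)
    (a : Fin n → ℂ) :
    eLpNorm (fun ω => ∑ j, a j * φ j ω) 2 P = ENNReal.ofReal (√(∑ i, ‖a i‖ ^ 2)) := by
  have hf := comb_memLp hm hb 2 a
  rw [hf.eLpNorm_eq_integral_rpow_norm (by norm_num) (by norm_num), Real.sqrt_eq_rpow]
  congr 1
  norm_num
  congr 1
  have h1 : ∫ ω, (starRingEnd ℂ) (∑ j, a j * φ j ω) * (∑ j, a j * φ j ω) ∂P =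
      ∑ i, (starRingEnd ℂ) (a i) * a i := by
    have e : ∀ ω, (starRingEnd ℂ) (∑ j, a j * φ j ω) * (∑ j, a j * φ j ω) =
        ∑ i, (starRingEnd ℂ) (a i) * ((starRingEnd ℂ) (φ i ω) * (∑ j, a j * φ j ω)) := by
      intro ω
      rw [map_sum, Finset.sum_mul]
      exact Finset.sum_congr rfl (fun j _ => by rw [map_mul]; ring)
    simp only [e]
    rw [integral_finsetSum]
    · simp only [integral_const_mul, coef_eq hm hb ho a]
    · intro i _
      apply Integrable.const_mul
      have h1 : MemLp (fun ω => (starRingEnd ℂ) (φ i ω)) 2 P := (phi_memLp hm hb 2 i).star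
      exact h1.integrable_mul hf
  have h2 : ∀ z : ℂ, (starRingEnd ℂ) z * z = ((‖z‖ ^ 2 : ℝ) : ℂ) := by
    intro z
    rw [Complex.conj_mul']; push_cast; rfl
  simp only [h2] at h1
  rw [integral_complex_ofReal, ← Complex.ofReal_sum] at h1
  exact Complex.ofReal_injective h1

lemma L_pos (hn : 4 ≤ n) (hb : ∀ j, ∀ᵐ ω ∂P, ‖φ j ω‖ ≤ L)
    (ho : ∀ i j, (∫ ω, (starRingEnd ℂ) (φ i ω) * φ j ω ∂P) = if i = j then 1 else 0) :
    0 < L := by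
  by_contra! h
  let i : Fin n := ⟨0, by omega⟩
  have h1 := ho i i
  rw [if_pos rfl, integral_eq_zero_of_ae] at h1
  · exact zero_ne_one h1
  · filter_upwards [hb i] with ω hω
    have : φ i ω = 0 := norm_le_zero_iff.1 (hω.trans h)
    simp [this]

lemma final_bound (hn : 4 ≤ n) (hm : ∀ j, AEStronglyMeasurable (φ j) P)
    (ho : ∀ i j, (∫ ω, (starRingEnd ℂ) (φ i ω) * φ j ω ∂P) = if i = j then 1 else 0)
    (hb : ∀ j, ∀ᵐ ω ∂P, ‖φ j ω‖ ≤ L) {p : ℝ} (hp0 : 1 < p) (hp1 : p < 2) :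
    ∃ ε : Fin n → Bool, |∑ i, sg (ε i)| ≤ 4 * √n ∧
      ∀ a : Fin n → ℂ, (∀ i, ε i = false → a i = 0) ∨ (∀ i, ε i = true → a i = 0) →
        eLpNorm (fun ω => ∑ j, a j * φ j ω) 2 P ≤
          ENNReal.ofReal (576000 / (p - 1) ^ ((5 : ℝ) / 2) * L * √(Real.log n)) *
            eLpNorm (fun ω => ∑ j, a j * φ j ω) (ENNReal.ofReal p) P := by
  have hL := L_pos hn hb ho
  haveI : Fact (1 ≤ ENNReal.ofReal p) := ⟨by simpa using hp0.le⟩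
  have hq : 1 ≤ ENNReal.ofReal p := Fact.out
  let T : (Fin n → ℂ) →ₗ[ℝ] Lp ℂ (ENNReal.ofReal p) P :=
    { toFun := fun a => (comb_memLp hm hb (ENNReal.ofReal p) a).toLp _
      map_add' := by
        intro a b
        rw [← MemLp.toLp_add]
        apply MemLp.toLp_congr
        filter_upwards with ω
        simp [add_mul, Finset.sum_add_distrib]
      map_smul' := by
        intro c a
        rw [RingHom.id_apply, ← MemLp.toLp_const_smul]
        apply MemLp.toLp_congr
        filter_upwards with ω
        simp [mul_assoc, Finset.mul_sum] }
  have hTn : ∀ a, ‖T a‖ = (eLpNorm (fun ω => ∑ j, a j * φ j ω) (ENNReal.ofReal p) P).toReal :=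
    fun a => Lp.norm_toLp _ (comb_memLp hm hb (ENNReal.ofReal p) a)
  have hη : 0 < (p - 1) / 4 := by linarith
  obtain ⟨ρ, hρ⟩ : ∃ ρ, ρ = 72000 * L / ((p - 1) / 4 * √((p - 1) / 4)) * √(Real.log n) := ⟨_, rfl⟩
  obtain ⟨ε, h1, h2⟩ := core_split hn hη (by linarith) (uconv_Lp P hp0 hp1) hL T
    (fun a i => by rw [hTn]; exact coef_le hm hb hL.le ho _ hq a i) ρ hρ
  refine ⟨ε, h1, fun a ha => ?_⟩
  have hρ0 : 0 ≤ ρ := by rw [hρ]; positivity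
  have h3 : |∑ i, sg (ε i) * ‖a i‖ ^ 2| = ∑ i, ‖a i‖ ^ 2 := by
    rcases ha with ha | ha
    · have : ∑ i, sg (ε i) * ‖a i‖ ^ 2 = ∑ i, ‖a i‖ ^ 2 := by
        refine Finset.sum_congr rfl (fun i _ => ?_)
        cases hi : ε i
        · simp [ha i hi]
        · simp [sg]
      rw [this, abs_of_nonneg (by positivity)]
    · have : ∑ i, sg (ε i) * ‖a i‖ ^ 2 = -∑ i, ‖a i‖ ^ 2 := by
        rw [← Finset.sum_neg_distrib]
        refine Finset.sum_congr rfl (fun i _ => ?_)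
        cases hi : ε i
        · simp [sg]
        · simp [ha i hi]
      rw [this, abs_neg, abs_of_nonneg (by positivity)]
  have h4 := h2 a
  rw [h3] at h4
  have h5 : √(∑ i, ‖a i‖ ^ 2) ≤ ρ * ‖T a‖ := by
    apply Real.sqrt_le_iff.2 ⟨by positivity, ?_⟩
    rw [mul_pow]; linarith
  have h6 : ρ ≤ 576000 / (p - 1) ^ ((5 : ℝ) / 2) * L * √(Real.log n) := by
    have hp1' : 0 < p - 1 := by linarith
    have e1 : √((p - 1) / 4) = √(p - 1) / 2 := by
      rw [Real.sqrt_div hp1'.le, show (4 : ℝ) = 2 ^ 2 by norm_num, Real.sqrt_sq (by norm_num)]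
    have e2 : (p - 1) ^ ((5 : ℝ) / 2) = (p - 1) ^ 2 * √(p - 1) := by
      rw [Real.sqrt_eq_rpow, ← Real.rpow_natCast, ← Real.rpow_add hp1']
      norm_num
    have hs : 0 < √(p - 1) := Real.sqrt_pos.2 hp1'
    have e3 : 72000 * L / ((p - 1) / 4 * (√(p - 1) / 2)) * √(Real.log n) =
        (576000 / ((p - 1) * √(p - 1))) * L * √(Real.log n) := by
      field_simp; ring
    rw [hρ, e1, e2, e3]
    gcongr
    nlinarith
  rw [l2_eq hm hb ho a, ← ENNReal.ofReal_toReal (comb_memLp hm hb (ENNReal.ofReal p) a).2.ne,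
    ← ENNReal.ofReal_mul (hρ0.trans h6), ← hTn]
  exact ENNReal.ofReal_le_ofReal (h5.trans (mul_le_mul_of_nonneg_right h6 (norm_nonneg _)))

end Fin



/-- Kashin-type splitting of a bounded orthonormal system with the `L_p`-`L₂`
comparison `‖·‖_{L₂} ≤ (C/(p−1)^{5/2}) L √(log n) ‖·‖_{L_p}` on both halves. -/
theorem stmt11 :
    ∃ c C : ℝ, 0 < c ∧ 0 < C ∧
      ∀ (Ω : Type*) [MeasurableSpace Ω] (P : Measure Ω) [IsProbabilityMeasure P]
        (n : ℕ), 4 ≤ n → Even n →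
        ∀ (φ : Fin n → Ω → ℂ) (L : ℝ),
        (∀ j, AEStronglyMeasurable (φ j) P) →
        (∀ i j, (∫ ω, (starRingEnd ℂ) (φ i ω) * φ j ω ∂P) = if i = j then 1 else 0) →
        (∀ j, ∀ᵐ ω ∂P, ‖φ j ω‖ ≤ L) →
        ∀ p : ℝ, 1 < p → p < 2 →
        ∃ I : Finset (Fin n),
          (n : ℝ) / 2 - c * Real.sqrt n ≤ I.card ∧
          (I.card : ℝ) ≤ (n : ℝ) / 2 + c * Real.sqrt n ∧
          ∀ a : Fin n → ℂ,
            eLpNorm (fun ω => ∑ i ∈ I, a i * φ i ω) 2 P ≤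
              ENNReal.ofReal
                  (C / (p - 1) ^ ((5 : ℝ) / 2) * L * Real.sqrt (Real.log n)) *
                eLpNorm (fun ω => ∑ i ∈ I, a i * φ i ω) (ENNReal.ofReal p) P ∧
            eLpNorm (fun ω => ∑ i ∈ Iᶜ, a i * φ i ω) 2 P ≤
              ENNReal.ofReal
                  (C / (p - 1) ^ ((5 : ℝ) / 2) * L * Real.sqrt (Real.log n)) *
                eLpNorm (fun ω => ∑ i ∈ Iᶜ, a i * φ i ω) (ENNReal.ofReal p) P := by
  refine ⟨2, 576000, by norm_num, by norm_num, ?_⟩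
  intro Ω _ P _ n hn _ φ L hm ho hb p hp0 hp1
  obtain ⟨ε, h1, h2⟩ := final_bound hn hm ho hb hp0 hp1
  have hsum : ((Finset.univ.filter (fun i => ε i = true)).card : ℝ) = n / 2 + (∑ i, sg (ε i)) / 2 := by
    have e : ∀ i, sg (ε i) = 2 * (if ε i = true then (1 : ℝ) else 0) - 1 := by
      intro i
      cases ε i <;> norm_num [sg]
    simp only [e, Finset.sum_sub_distrib, ← Finset.mul_sum, Finset.sum_boole]
    simp
    ring
  have h3 := abs_le.1 h1
  refine ⟨Finset.univ.filter (fun i => ε i = true), by rw [hsum]; linarith,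
    by rw [hsum]; linarith, fun a => ⟨?_, ?_⟩⟩
  · have h4 := h2 (fun i => if ε i = true then a i else 0) (Or.inl (fun i hi => by simp [hi]))
    have e : ∀ ω, ∑ i, (if ε i = true then a i else 0) * φ i ω =
        ∑ i ∈ Finset.univ.filter (fun i => ε i = true), a i * φ i ω := by
      intro ω
      rw [Finset.sum_filter]
      exact Finset.sum_congr rfl (fun i _ => by split_ifs <;> simp)
    simp only [e] at h4
    exact h4
  · have h4 := h2 (fun i => if ε i = true then 0 else a i) (Or.inr (fun i hi => by simp [hi]))
    have e : ∀ ω, ∑ i, (if ε i = true then 0 else a i) * φ i ω =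
        ∑ i ∈ (Finset.univ.filter (fun i => ε i = true))ᶜ, a i * φ i ω := by
      intro ω
      rw [Finset.compl_filter, Finset.sum_filter]
      exact Finset.sum_congr rfl (fun i _ => by split_ifs <;> simp)
    simp only [e] at h4
    exact h4
end

section
/- Let N ≥ 2, let G = (ZMod 2)^N with the uniform probability measure, set n = 2^N, and let Ĝ be the group of the n characters of G, which form an orthonormal system in L₂(G) bounded by 1 in L∞. Then for every integer k with √n ≤ k ≤ n/2 and every subset I ⊆ Ĝ with |I| ≥ n − k, there exist complex coefficients (a_γ)_{γ ∈ I}, not all zero, such that ‖∑_{γ ∈ I} a_γ γ‖_{L₂(G)} ≥ √( (n·log n) / (20·k) ) · ‖∑_{γ ∈ I} a_γ γ‖_{L₁(G)}. In particular, no constant smaller than √( (n·log n)/(20k) ) can replace the constant in the L₂–L₁ comparison inequality on the span of (γ)_{γ ∈ I}. -/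
open Finset

theorem step_real (al al' s x : ℝ) (i : ℕ) (h0 : 0 ≤ al) (h0' : 0 ≤ al') (hs : 0 ≤ s)
    (hx0 : 0 ≤ x) (hx1 : x ≤ 1) (h : x - i * s / 2 ≤ al) (h' : al * (al - s) ≤ al') :
    x ^ 2 - (i + 1) * s ≤ al' := by
  have hi : (0:ℝ) ≤ i := Nat.cast_nonneg i
  have his : 0 ≤ i * s := mul_nonneg hi hs
  set e := (i:ℝ) * s / 2 with he
  have hee : (i + 1) * s = 2 * e + s := by rw [he]; ring
  rw [hee]
  by_cases hc : x ≤ e + s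
  · nlinarith
  · push Not at hc
    have : (x - e) * (x - e - s) ≤ al * (al - s) := by
      apply mul_le_mul <;> nlinarith
    nlinarith [mul_nonneg (by linarith : 0 ≤ e) (by linarith : 0 ≤ 1 - x), mul_nonneg hs (by linarith : 0 ≤ 1 - x), mul_nonneg hs (by linarith : 0 ≤ e), sq_nonneg e]

theorem step_group {H : Type*} [CommGroup H] [Fintype H] [DecidableEq H]
    (A V : Finset H) (hV : V.card < Fintype.card H) :
    ∃ h, h ∉ V ∧ ((A.card : ℝ) * (A.card - V.card)) / Fintype.card H ≤
      ((A.filter (fun a => a * h ∈ A)).card : ℝ) := by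
  have hn : (0:ℝ) < Fintype.card H := by
    exact_mod_cast Fintype.card_pos
  have hne : (Vᶜ).Nonempty := by
    rw [← Finset.card_pos, Finset.card_compl]; omega
  have htot : ∑ h : H, (A.filter (fun a => a * h ∈ A)).card = A.card * A.card := by
    simp only [Finset.card_filter]
    rw [Finset.sum_comm]
    have : ∀ a ∈ A, (∑ h : H, if a * h ∈ A then 1 else 0) = A.card := by
      intro a _
      refine (Fintype.sum_equiv (Equiv.mulLeft a) _ (fun h => if h ∈ A then 1 else 0) (fun _ => rfl)).trans ?_
      simp
    rw [Finset.sum_congr rfl this]; simp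
  have hVs : ∑ h ∈ V, (A.filter (fun a => a * h ∈ A)).card ≤ V.card * A.card := by
    rw [← smul_eq_mul]
    exact Finset.sum_le_card_nsmul _ _ _ (fun h _ => Finset.card_filter_le _ _)
  have hsplit := Finset.sum_add_sum_compl V (fun h => (A.filter (fun a => a * h ∈ A)).card)
  by_contra hcon
  push Not at hcon
  set B := (A.card : ℝ) * (A.card - V.card) with hB
  have hBs : B ≤ ∑ h ∈ Vᶜ, ((A.filter (fun a => a * h ∈ A)).card : ℝ) := by
    have h1 : A.card * A.card ≤ V.card * A.card + ∑ h ∈ Vᶜ, (A.filter (fun a => a * h ∈ A)).card := by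
      omega
    have h2 : (A.card : ℝ) * A.card ≤ V.card * A.card + ∑ h ∈ Vᶜ, ((A.filter (fun a => a * h ∈ A)).card : ℝ) := by
      exact_mod_cast h1
    rw [hB]; linarith
  have hlt : ∑ h ∈ Vᶜ, ((A.filter (fun a => a * h ∈ A)).card : ℝ) < ∑ h ∈ Vᶜ, B / Fintype.card H := by
    apply Finset.sum_lt_sum_of_nonempty hne
    intro h hh
    exact hcon h (by simpa using hh)
  obtain ⟨h, hh⟩ := hne
  have hpos : 0 < B / Fintype.card H :=
    lt_of_le_of_lt (Nat.cast_nonneg _) (hcon h (by simpa using hh))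
  have : ∑ h ∈ Vᶜ, B / Fintype.card H ≤ B := by
    rw [Finset.sum_const, nsmul_eq_mul]
    calc ((Vᶜ).card : ℝ) * (B / Fintype.card H) ≤ Fintype.card H * (B / Fintype.card H) := by
          gcongr
          exact Finset.card_le_univ _
      _ = B := by field_simp
  linarith

theorem exists_coset {H : Type*} [CommGroup H] [Fintype H] [DecidableEq H]
    (hH : ∀ h : H, h * h = 1) (I : Finset H) (be : ℝ) (hbe0 : 0 ≤ be)
    (hbe : be * Fintype.card H ≤ I.card) (d : ℕ) (hd : 2 ^ d ≤ Fintype.card H) :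
    ∃ V A : Finset H, 1 ∈ V ∧ (∀ u ∈ V, ∀ v ∈ V, u * v ∈ V) ∧ V.card = 2 ^ d ∧
      (∀ a ∈ A, ∀ v ∈ V, a * v ∈ I) ∧
      be ^ (2 ^ d) - d * (2 ^ d / Fintype.card H) / 2 ≤ (A.card : ℝ) / Fintype.card H := by
  have hn : (0:ℝ) < Fintype.card H := by
    exact_mod_cast Fintype.card_pos
  have hbe1 : be ≤ 1 := by
    have : (I.card : ℝ) ≤ Fintype.card H := by exact_mod_cast Finset.card_le_univ I
    by_contra hc
    push Not at hc
    nlinarith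
  induction d with
  | zero =>
    refine ⟨{1}, I, by simp, by simp, by simp, by simp, ?_⟩
    rw [le_div_iff₀ hn]; simpa using hbe
  | succ d ih =>
    have hlt : 2 ^ d < Fintype.card H := by
      have : 0 < 2 ^ d := by positivity
      rw [pow_succ] at hd; omega
    obtain ⟨V, A, h1, hmul, hc, hA, hcard⟩ := ih hlt.le
    obtain ⟨h, hhV, hh⟩ := step_group A V (by rw [hc]; exact hlt)
    refine ⟨V ∪ V.image (fun v => h * v), A.filter (fun a => a * h ∈ A), by simp [h1], ?_, ?_, ?_, ?_⟩
    · intro u hu v hv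
      simp only [Finset.mem_union, Finset.mem_image] at hu hv ⊢
      rcases hu with hu | ⟨u, hu, rfl⟩ <;> rcases hv with hv | ⟨v, hv, rfl⟩
      · exact Or.inl (hmul _ hu _ hv)
      · exact Or.inr ⟨u * v, hmul _ hu _ hv, by rw [mul_left_comm]⟩
      · exact Or.inr ⟨u * v, hmul _ hu _ hv, by rw [mul_assoc]⟩
      · left
        rw [mul_mul_mul_comm, hH, one_mul]
        exact hmul _ hu _ hv
    · rw [Finset.card_union_of_disjoint, Finset.card_image_of_injective _ (mul_right_injective h), hc, pow_succ]
      · ring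
      · rw [Finset.disjoint_left]
        intro u hu hu'
        obtain ⟨v, hv, rfl⟩ := Finset.mem_image.1 hu'
        apply hhV
        have := hmul _ hu _ hv
        rwa [mul_assoc, hH, mul_one] at this
    · intro a ha v hv
      simp only [Finset.mem_filter] at ha
      simp only [Finset.mem_union, Finset.mem_image] at hv
      rcases hv with hv | ⟨v, hv, rfl⟩
      · exact hA _ ha.1 _ hv
      · rw [← mul_assoc]; exact hA _ ha.2 _ hv
    · have := step_real ((A.card : ℝ) / Fintype.card H) (((A.filter (fun a => a * h ∈ A)).card : ℝ) / Fintype.card H)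
        (2 ^ d / Fintype.card H) (be ^ (2 ^ d)) d (by positivity) (by positivity) (by positivity)
        (by positivity) (pow_le_one₀ hbe0 hbe1) hcard ?_
      · rw [pow_succ, pow_mul]
        refine le_trans (le_of_eq ?_) this
        push_cast
        ring
      · rw [hc] at hh
        push_cast at hh
        rw [← sub_div, ← mul_div_assoc, div_le_div_iff_of_pos_right hn]
        refine le_trans (le_of_eq ?_) hh
        ring

theorem num_bound (N : ℕ) (hN : 2 ≤ N) (k : ℕ)
    (hk₁ : Real.sqrt (2 ^ N) ≤ k) (hk₂ : (k : ℝ) ≤ (2 : ℝ) ^ N / 2) :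
    ∃ d : ℕ, d ≤ N ∧ (2 : ℝ) ^ N * Real.log ((2 : ℝ) ^ N) / (20 * k) ≤ 2 ^ d ∧
      0 < (1 - k / (2:ℝ) ^ N) ^ (2 ^ d) - d * (2 ^ d / (2:ℝ) ^ N) / 2 := by
  set n : ℝ := (2:ℝ) ^ N with hn
  have hnpos : 0 < n := by positivity
  have hspos : 0 < Real.sqrt n := Real.sqrt_pos.2 hnpos
  have hkpos : (0:ℝ) < k := lt_of_lt_of_le hspos hk₁
  have hss : Real.sqrt n * Real.sqrt n = n := Real.mul_self_sqrt hnpos.le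
  set T := n * Real.log n / (20 * k) with hT
  have hde : k / n ≤ 1 / 2 := by rw [div_le_iff₀ hnpos]; linarith
  have hde0 : 0 < k / n := by positivity
  have hex : ∃ d : ℕ, T ≤ 2 ^ d := by
    obtain ⟨d, hd⟩ := pow_unbounded_of_one_lt T (by norm_num : (1:ℝ) < 2)
    exact ⟨d, hd.le⟩
  classical
  obtain ⟨d, hd, hmin⟩ : ∃ d : ℕ, T ≤ 2 ^ d ∧ ∀ m < d, ¬ T ≤ 2 ^ m :=
    ⟨Nat.find hex, Nat.find_spec hex, fun m hm => Nat.find_min hex hm⟩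
  rcases d with _ | d
  · refine ⟨0, by omega, hd, ?_⟩
    simp; linarith
  have h2 : (2:ℝ) ^ (d+1) < 2 * T := by
    have := hmin d (by omega)
    push Not at this
    rw [pow_succ]; linarith
  set t := Real.log n with ht
  have htN : t = N * Real.log 2 := by rw [ht, hn, Real.log_pow]
  have hl2 : 0.69 < Real.log 2 := by have := Real.log_two_gt_d9; linarith
  have hN' : (2:ℝ) ≤ N := by exact_mod_cast hN
  have htpos : 0 < t := by rw [htN]; positivity
  have hexp : Real.exp t = n := Real.exp_log hnpos
  -- 2^(d+1)/n < t/(10 √n)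
  have h3 : (2:ℝ) ^ (d+1) / n * (10 * k) < t := by
    have : 2 * T * (10 * k) = n * t := by rw [hT]; field_simp; norm_num
    have h4 : (2:ℝ) ^ (d+1) * (10 * k) < n * t := by rw [← this]; gcongr
    rw [div_mul_eq_mul_div, div_lt_iff₀ hnpos]; linarith
  have hsq : Real.sqrt n = Real.exp (t / 2) := by
    rw [Real.sqrt_eq_iff_mul_self_eq hnpos.le (Real.exp_pos _).le, ← Real.exp_add, ← hexp]; ring_nf
  have h5 : (2:ℝ) ^ (d+1) / n * (10 * Real.exp (t/2)) < t := by
    refine lt_of_le_of_lt ?_ h3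
    rw [← hsq]; gcongr
  have hdN : d + 1 ≤ N := by
    have h6 : t / 2 + 1 ≤ Real.exp (t/2) := Real.add_one_le_exp _
    have h7 : (2:ℝ) ^ (d+1) / n ≤ 1 := by
      by_contra hc
      push Not at hc
      nlinarith
    rw [div_le_one hnpos, hn] at h7
    exact (pow_le_pow_iff_right₀ (by norm_num : (1:ℝ) < 2)).1 h7
  refine ⟨d + 1, hdN, hd, ?_⟩
  have hpow : Real.exp (- (t / 5)) ≤ (1 - k / n) ^ (2 ^ (d+1)) := by
    have h8 : Real.exp (-(2 * (k / n))) ≤ 1 - k / n := by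
      have h9 : (1 - k / n)⁻¹ ≤ Real.exp (2 * (k/n)) := by
        refine le_trans ?_ (Real.add_one_le_exp _)
        rw [inv_le_iff_one_le_mul₀ (by linarith)]
        nlinarith
      rw [Real.exp_neg]
      exact inv_le_of_inv_le₀ (by linarith) h9
    calc Real.exp (- (t / 5)) ≤ Real.exp (-(2 * (k / n))) ^ (2 ^ (d+1)) := by
          rw [← Real.exp_nat_mul]
          apply Real.exp_le_exp.2
          push_cast
          have : (2:ℝ) ^ (d+1) / n * (10 * k) = 10 * (2 ^ (d+1) * (k / n)) := by ring
          rw [this] at h3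
          linarith
      _ ≤ _ := by gcongr
  have hdt : ((d + 1 : ℕ) : ℝ) * 0.69 ≤ t := by
    have : ((d+1:ℕ):ℝ) ≤ N := by exact_mod_cast hdN
    rw [htN]; gcongr
  -- final
  set D : ℝ := ((d + 1 : ℕ) : ℝ) with hD
  have hDpos : 0 < D := by rw [hD]; positivity
  set P := (2:ℝ) ^ (d+1) / n with hP
  have hPpos : 0 < P := by positivity
  set y := Real.exp (0.15 * t) with hy
  have hy1 : 0.3 * t ≤ y := by
    have h10 : 0.15 * t ≤ Real.exp (0.15 * t - 1) := by
      have := Real.add_one_le_exp (0.15 * t - 1); linarith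
    have h11 : y = Real.exp 1 * Real.exp (0.15 * t - 1) := by
      rw [hy, ← Real.exp_add]; ring_nf
    have h12 : (2:ℝ) ≤ Real.exp 1 := by have := Real.add_one_le_exp (1:ℝ); linarith
    rw [h11]; nlinarith
  have hz : Real.exp (t/2) = y * y * Real.exp (t/5) := by
    rw [hy, ← Real.exp_add, ← Real.exp_add]; ring_nf
  have hw : Real.exp (t/5) * Real.exp (-(t/5)) = 1 := by rw [← Real.exp_add]; simp
  have hyy : 0.09 * t * t ≤ y * y := by nlinarith
  have key : D * P / 2 < Real.exp (-(t/5)) := by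
    have ew := Real.exp_pos (t/5)
    rw [Real.exp_neg, lt_inv_comm₀ (by positivity) ew, lt_inv_comm₀ ew (by positivity)]
    rw [lt_inv_comm₀ (by positivity) ew, ← one_div, lt_div_iff₀ (by positivity)]
    have a1 : P * (10 * (0.09 * t * t * Real.exp (t/5))) ≤ P * (10 * Real.exp (t/2)) := by
      rw [hz]; gcongr
    have a2 : (P * Real.exp (t/5) * (0.9 * t)) * t < 1 * t := by linarith
    have a3 := lt_of_mul_lt_mul_right a2 htpos.le
    have a4 : P * Real.exp (t/5) * (0.9 * (D * 0.69)) ≤ P * Real.exp (t/5) * (0.9 * t) := by gcongr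
    nlinarith [mul_pos (mul_pos hPpos ew) hDpos]
  linarith

theorem stmt15 (N : ℕ) (hN : 2 ≤ N) (k : ℕ)
    (hk₁ : Real.sqrt (2 ^ N) ≤ k) (hk₂ : (k : ℝ) ≤ (2 : ℝ) ^ N / 2)
    (I : Finset (AddChar (Fin N → ZMod 2) Circle))
    (hI : 2 ^ N - k ≤ I.card) :
    ∃ a : AddChar (Fin N → ZMod 2) Circle → ℂ,
      (∃ γ ∈ I, a γ ≠ 0) ∧
      Real.sqrt ((2 : ℝ) ^ N * Real.log ((2 : ℝ) ^ N) / (20 * k)) *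
          (((2 : ℝ) ^ N)⁻¹ * ∑ x : Fin N → ZMod 2, ‖∑ γ ∈ I, a γ * (γ x : ℂ)‖) ≤
        Real.sqrt (((2 : ℝ) ^ N)⁻¹ *
          ∑ x : Fin N → ZMod 2, ‖∑ γ ∈ I, a γ * (γ x : ℂ)‖ ^ 2) := by
  classical
  let _ : Fintype (AddChar (Fin N → ZMod 2) Circle) :=
    Fintype.ofEquiv _ (AddChar.circleEquivComplex (α := Fin N → ZMod 2)).symm.toEquiv
  have hcard : Fintype.card (AddChar (Fin N → ZMod 2) Circle) = 2 ^ N := by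
    rw [Fintype.card_congr (AddChar.circleEquivComplex (α := Fin N → ZMod 2)).toEquiv, AddChar.card_eq]
    simp
  have hcardR : (Fintype.card (AddChar (Fin N → ZMod 2) Circle) : ℝ) = 2 ^ N := by
    rw [hcard]; push_cast; rfl
  have hnpos : (0:ℝ) < 2 ^ N := by positivity
  obtain ⟨d, hdN, hT, hpos⟩ := num_bound N hN k hk₁ hk₂
  have hH : ∀ h : AddChar (Fin N → ZMod 2) Circle, h * h = 1 := by
    intro h
    ext x
    rw [AddChar.mul_apply, ← AddChar.map_add_eq_mul, show x + x = 0 from funext fun i => CharTwo.add_self_eq_zero (x i)]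
    simp
  obtain ⟨V, A, h1, hmul, hVc, hA, hAc⟩ := exists_coset hH I (1 - k / (2:ℝ) ^ N)
    (by rw [sub_nonneg, div_le_one hnpos]; linarith)
    (by
      rw [hcardR, sub_mul, div_mul_cancel₀ _ hnpos.ne', one_mul]
      have : 2 ^ N ≤ I.card + k := by omega
      have : (2:ℝ) ^ N ≤ I.card + k := by exact_mod_cast this
      linarith) d
    (by rw [hcard]; exact Nat.pow_le_pow_right (by norm_num) hdN)
  rw [hcardR] at hAc
  have hAne : A.Nonempty := by
    rw [Finset.nonempty_iff_ne_empty]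
    rintro rfl
    simp at hAc
    linarith
  obtain ⟨ξ, hξ⟩ := hAne
  set W := V.image (fun v => ξ * v) with hW
  have hWI : W ⊆ I := by
    intro w hw
    obtain ⟨v, hv, rfl⟩ := Finset.mem_image.1 hw
    exact hA _ hξ _ hv
  have hsum : ∀ x : Fin N → ZMod 2,
      ‖∑ γ ∈ I, (if γ ∈ W then (1:ℂ) else 0) * (γ x : ℂ)‖ = ‖∑ v ∈ V, (v x : ℂ)‖ := by
    intro x
    have : ∑ γ ∈ I, (if γ ∈ W then (1:ℂ) else 0) * (γ x : ℂ) = (ξ x : ℂ) * ∑ v ∈ V, (v x : ℂ) := by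
      simp only [ite_mul, one_mul, zero_mul]
      rw [← Finset.sum_filter, Finset.filter_mem_eq_inter, Finset.inter_eq_right.2 hWI, hW,
        Finset.sum_image (fun a _ b _ hab => mul_left_cancel hab), Finset.mul_sum]
      simp
    have hn1 : ‖(ξ x : ℂ)‖ = 1 := Circle.norm_coe _
    rw [this, norm_mul, hn1, one_mul]
  have hsq : ∀ x : Fin N → ZMod 2, (∑ v ∈ V, (v x : ℂ)) * (∑ v ∈ V, (v x : ℂ)) = 2 ^ d * ∑ v ∈ V, (v x : ℂ) := by
    intro x
    rw [Finset.sum_mul]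
    have : ∀ v ∈ V, (v x : ℂ) * ∑ w ∈ V, (w x : ℂ) = ∑ w ∈ V, (w x : ℂ) := by
      intro v hv
      rw [Finset.mul_sum]
      refine Finset.sum_bij' (fun w _ => v * w) (fun w _ => v * w) (fun w hw => hmul _ hv _ hw)
        (fun w hw => hmul _ hv _ hw) ?_ ?_ ?_
      · intro w _; simp only [← mul_assoc, hH, one_mul]
      · intro w _; simp only [← mul_assoc, hH, one_mul]
      · intro w _; simp
    rw [Finset.sum_congr rfl this, Finset.sum_const, hVc]; simp
  have hval : ∀ x : Fin N → ZMod 2, ‖∑ v ∈ V, (v x : ℂ)‖ ^ 2 = 2 ^ d * ‖∑ v ∈ V, (v x : ℂ)‖ := by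
    intro x
    rw [sq, ← norm_mul, hsq, norm_mul]; simp
  have hval2 : ∀ x : Fin N → ZMod 2, ((‖∑ v ∈ V, (v x : ℂ)‖ : ℝ) : ℂ) = ∑ v ∈ V, (v x : ℂ) := by
    intro x
    by_cases h0 : ∑ v ∈ V, (v x : ℂ) = 0
    · rw [h0]; simp
    · have := mul_right_cancel₀ h0 (hsq x)
      rw [this]; simp
  have hS1 : ∑ x : Fin N → ZMod 2, ‖∑ v ∈ V, (v x : ℂ)‖ = 2 ^ N := by
    have : ((∑ x : Fin N → ZMod 2, ‖∑ v ∈ V, (v x : ℂ)‖ : ℝ) : ℂ) = 2 ^ N := by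
      push_cast
      rw [Finset.sum_congr rfl (fun x _ => hval2 x), Finset.sum_comm,
        Finset.sum_eq_single_of_mem 1 h1]
      · simp
      · intro v _ hv
        have hne : AddChar.circleEquivComplex v ≠ 0 := by
          intro h; apply hv
          apply AddChar.circleEquivComplex.injective
          rw [h]; exact (map_zero AddChar.circleEquivComplex).symm
        have := AddChar.sum_eq_zero_iff_ne_zero.2 hne
        exact this
    exact_mod_cast this
  refine ⟨fun γ => if γ ∈ W then 1 else 0, ⟨ξ * 1, hA _ hξ _ h1, ?_⟩, ?_⟩
  · have : ξ * 1 ∈ W := Finset.mem_image_of_mem _ h1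
    simp [-mul_one, this]
  · simp only [hsum, hval]
    rw [← Finset.mul_sum, hS1, inv_mul_cancel₀ hnpos.ne', mul_one, mul_left_comm, inv_mul_cancel₀ hnpos.ne', mul_one]
    exact Real.sqrt_le_sqrt hT
end
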